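/- (Theorem 17, Holmstedt-type formula) Let 0 < θ₀ < θ₁ < 1, 0 < q₁, r₀, r₁ ≤ ∞, a₁, b₀, b₁ ∈ SV, and ‖s^{-1/r₁} b₁(s)/a₁(s)‖_{r₁,(1,∞)} < ∞. Put c₁(t) = a₁(t) ‖s^{-1/r₁} b₁(s)/a₁(s)‖_{r₁,(t,∞)} and ρ(t) = t^{θ₁-θ₀} b₀(t)/c₁(t). Then, with constants independent of f and t, for all f ∈ Ā_{θ₀,r₀;b₀} + Ā^𝓛_{θ₁,r₁,b₁,q₁,a₁} and all t > 0: K(ρ(t), f; Ā_{θ₀,r₀;b₀}, Ā^𝓛_{θ₁,r₁,b₁,q₁,a₁}) ≈ ‖u^{-θ₀-1/r₀} b₀(u) K(u, f)‖_{r₀,(0,t)} + ρ(t) ‖ s^{-1/r₁} (b₁(s)/a₁(s)) ‖u^{-θ₁-1/q₁} a₁(u) K(u, f)‖_{q₁,(t,s)} ‖_{r₁,(t,∞)}. -/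

import Mathlib

open MeasureTheory Set ENNReal Filter

noncomputable section

/-- The `L_q` quasi-norm (with respect to Lebesgue measure) of an `ℝ≥0∞`-valued
function over a set of reals; for `q = ∞` it is the essential supremum. -/
def LqNorm (q : ℝ≥0∞) (s : Set ℝ) (g : ℝ → ℝ≥0∞) : ℝ≥0∞ :=
  if q = ∞ then essSup g (volume.restrict s)
  else (∫⁻ t in s, g t ^ q.toReal) ^ q⁻¹.toReal

/-- The weight `s ↦ s ^ (-1/r) * b s`, as an `ℝ≥0∞`-valued function
(`1/∞ = 0` by convention). -/
def svWgt (r : ℝ≥0∞) (b : ℝ → ℝ) : ℝ → ℝ≥0∞ :=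
  fun s => ENNReal.ofReal (s ^ (-(r⁻¹.toReal)) * b s)

/-- `f` and `g` are equivalent on `s`: each is bounded by a constant multiple
of the other there. -/
def EquivOn (s : Set ℝ) (f g : ℝ → ℝ) : Prop :=
  ∃ C : ℝ, 0 < C ∧ ∀ t ∈ s, C⁻¹ * g t ≤ f t ∧ f t ≤ C * g t

/-- A positive measurable function `b` on `(0,∞)` is slowly varying if for every
`ε > 0`, `t ^ ε * b t` is equivalent to a non-decreasing function and
`t ^ (-ε) * b t` is equivalent to a non-increasing function. -/
def SlowlyVarying (b : ℝ → ℝ) : Prop :=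
  AEMeasurable b (volume.restrict (Ioi 0)) ∧ (∀ t ∈ Ioi (0:ℝ), 0 < b t) ∧
    ∀ ε : ℝ, 0 < ε →
      (∃ g : ℝ → ℝ, MonotoneOn g (Ioi 0) ∧ EquivOn (Ioi 0) (fun t => t ^ ε * b t) g) ∧
      (∃ g : ℝ → ℝ, AntitoneOn g (Ioi 0) ∧ EquivOn (Ioi 0) (fun t => t ^ (-ε) * b t) g)

/-- A quasi-Banach space continuously embedded into the ambient (Hausdorff) space `E`,
recorded via its extended-real-valued quasi-norm; the space itself is the set of
vectors of finite quasi-norm. -/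
structure QuasiBanach (E : Type*) [AddCommGroup E] [Module ℝ E] where
  N : E → ℝ≥0∞
  zero : N 0 = 0
  definite : ∀ x, N x = 0 → x = 0
  smul : ∀ (c : ℝ) (x : E), N (c • x) = ENNReal.ofReal |c| * N x
  quasi : ∃ C : ℝ≥0∞, 1 ≤ C ∧ C ≠ ∞ ∧ ∀ x y, N (x + y) ≤ C * (N x + N y)
  complete : ∀ f : ℕ → E,
    (∀ ε : ℝ≥0∞, 0 < ε → ∃ M : ℕ, ∀ m ≥ M, ∀ n ≥ M, N (f m - f n) < ε) →
    (∀ n, N (f n) ≠ ∞) →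
    ∃ g : E, N g ≠ ∞ ∧ Tendsto (fun n => N (f n - g)) atTop (nhds 0)

variable {E : Type*} [AddCommGroup E] [Module ℝ E]

/-- The Peetre K-functional of the couple whose quasi-norms are `N₀`, `N₁`. -/
def Kf (N₀ N₁ : E → ℝ≥0∞) (t : ℝ) (f : E) : ℝ≥0∞ :=
  ⨅ g : E, N₀ g + ENNReal.ofReal t * N₁ (f - g)

/-- The quasi-norm of the real interpolation space `Ā_{θ,q;b}`. -/
def normK (N₀ N₁ : E → ℝ≥0∞) (θ : ℝ) (q : ℝ≥0∞) (b : ℝ → ℝ) (f : E) : ℝ≥0∞ :=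
  LqNorm q (Ioi 0) fun u =>
    ENNReal.ofReal (u ^ (-θ - q⁻¹.toReal) * b u) * Kf N₀ N₁ u f

/-- The quasi-norm of the limiting interpolation space `Ā^𝓛_{σ,r,b,q,a}`. -/
def normL (N₀ N₁ : E → ℝ≥0∞) (σ : ℝ) (r q : ℝ≥0∞) (b a : ℝ → ℝ) (f : E) : ℝ≥0∞ :=
  LqNorm r (Ioi 0) fun t =>
    ENNReal.ofReal (t ^ (-(r⁻¹.toReal)) * (b t / a t)) *
      LqNorm q (Ioo 0 t) fun u =>
        ENNReal.ofReal (u ^ (-σ - q⁻¹.toReal) * a u) * Kf N₀ N₁ u f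

/-- The quasi-norm of the limiting interpolation space `Ā^𝓡_{σ,r,b,q,a}`. -/
def normR (N₀ N₁ : E → ℝ≥0∞) (σ : ℝ) (r q : ℝ≥0∞) (b a : ℝ → ℝ) (f : E) : ℝ≥0∞ :=
  LqNorm r (Ioi 0) fun t =>
    ENNReal.ofReal (t ^ (-(r⁻¹.toReal)) * (b t / a t)) *
      LqNorm q (Ioi t) fun u =>
        ENNReal.ofReal (u ^ (-σ - q⁻¹.toReal) * a u) * Kf N₀ N₁ u f

/-- Two (extended-real-valued) quasi-norms define the same space with
equivalent quasi-norms. -/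
def EquivNorms (nX nY : E → ℝ≥0∞) : Prop :=
  ∃ C : ℝ≥0∞, 0 < C ∧ C ≠ ∞ ∧ ∀ f : E, C⁻¹ * nY f ≤ nX f ∧ nX f ≤ C * nY f

/-! Relative to `du/u`, all the quasi-norms are weighted `L_q` quasi-norms of `k = K(·, f)`, which
is quasi-concave, and of the weights only their comparison with powers of `u` matters: `L_q`
quasi-norms of functions of positive power growth (decay) over `(0, t)` (over `(t, ∞)`) are bounded
by their value at `t`. Hence, for every `g`, the right-hand side of the formula for `K(·, g)` is
bounded by the quasi-norm of `g` in the first space, and also by `ρ(t)` times that in the second;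
adding these bounds over the two terms of a decomposition of `f` gives the lower estimate. For the
upper estimate, a nearly optimal decomposition `f = g + (f - g)` for `K(t, f)` satisfies
`K(u, g) ≲ k(min(u, t))` and `K(u, f - g) ≲ (u / max(u, t)) k(max(u, t))`, and the quasi-norms of
these two majorants are controlled by the right-hand side. -/

/-! ### Lebesgue quasi-norms and the measure `du/u` -/

section Lebesgue

variable {α : Type*} [MeasurableSpace α] {μ : Measure α} {q : ℝ≥0∞} {f g : α → ℝ≥0∞}

theorem eLpNorm_restrict_mono {s : Set α} (hs : MeasurableSet s) (h : ∀ x ∈ s, f x ≤ g x) :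
    eLpNorm f q (μ.restrict s) ≤ eLpNorm g q (μ.restrict s) :=
  eLpNorm_mono_enorm_ae (ae_restrict_of_forall_mem hs h)

theorem eLpNorm_restrict_mono_set {s t : Set α} (hst : s ⊆ t) :
    eLpNorm f q (μ.restrict s) ≤ eLpNorm f q (μ.restrict t) :=
  eLpNorm_mono_measure f (Measure.restrict_mono_set μ hst)

theorem eLpNorm_restrict_le_mul {s : Set α} (hs : MeasurableSet s) (hg : AEMeasurable g μ)
    {c : ℝ≥0∞} (h : ∀ x ∈ s, f x ≤ c * g x) :
    eLpNorm f q (μ.restrict s) ≤ c * eLpNorm g q (μ.restrict s) :=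
  eLpNorm_le_mul_eLpNorm_of_ae_le_mul'' q hg.restrict.aestronglyMeasurable
    (ae_restrict_of_forall_mem hs h)

theorem mul_eLpNorm_le (hg : AEMeasurable g μ) (c : ℝ≥0∞) :
    c * eLpNorm g q μ ≤ eLpNorm (fun x => c * g x) q μ := by
  rcases eq_or_ne q 0 with rfl | hq
  · simp
  rcases eq_or_ne q ∞ with rfl | hq'
  · simp only [eLpNorm_exponent_top, eLpNormEssSup, enorm_eq_self, ENNReal.essSup_const_mul, le_rfl]
  · have hp : 0 < q.toReal := ENNReal.toReal_pos hq hq'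
    simp only [eLpNorm_eq_lintegral_rpow_enorm_toReal hq hq', enorm_eq_self,
      ENNReal.mul_rpow_of_nonneg _ _ hp.le]
    rw [lintegral_const_mul'' _ (hg.pow_const _),
      ENNReal.mul_rpow_of_nonneg _ _ (by positivity), one_div, ENNReal.rpow_rpow_inv hp.ne']

theorem eLpNorm_restrict_le_add [NullSingletonClass μ] (hf : AEMeasurable f μ) {a : α}
    {s s₁ s₂ : Set α} (hs₁ : MeasurableSet s₁) (hs₂ : MeasurableSet s₂)
    (h : s ⊆ insert a (s₁ ∪ s₂)) :
    eLpNorm f q (μ.restrict s) ≤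
      LpAddConst q * (eLpNorm f q (μ.restrict s₁) + eLpNorm f q (μ.restrict s₂)) := by
  calc eLpNorm f q (μ.restrict s)
      ≤ eLpNorm f q (μ.restrict (s₁ ∪ s₂)) :=
        eLpNorm_mono_measure f <| Measure.restrict_mono'
          ((LE.le.eventuallyLE h).trans (insert_ae_eq_self a _).le) le_rfl
    _ = eLpNorm ((s₁ ∪ s₂).indicator f) q μ :=
        (eLpNorm_indicator_eq_eLpNorm_restrict (hs₁.union hs₂)).symm
    _ ≤ eLpNorm (s₁.indicator f + s₂.indicator f) q μ := by
        refine eLpNorm_mono_enorm fun x => ?_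
        by_cases hx₁ : x ∈ s₁ <;> by_cases hx₂ : x ∈ s₂ <;> simp [hx₁, hx₂]
    _ ≤ LpAddConst q * (eLpNorm (s₁.indicator f) q μ + eLpNorm (s₂.indicator f) q μ) :=
        eLpNorm_add_le' (hf.indicator hs₁).aestronglyMeasurable
          (hf.indicator hs₂).aestronglyMeasurable q
    _ = _ := by
        rw [eLpNorm_indicator_eq_eLpNorm_restrict hs₁, eLpNorm_indicator_eq_eLpNorm_restrict hs₂]

/- The integral hypothesis is the scale-invariant property shared by `φ u = u / t` on `(0, t)` and
`φ u = t / u` on `(t, ∞)` for the measure `du/u`. -/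
theorem exists_eLpNorm_ofReal_rpow_le (μ : Measure α) (q : ℝ≥0∞) {ε : ℝ} (hε : 0 < ε) :
    ∃ C : ℝ≥0∞, C ≠ ∞ ∧ ∀ {φ : α → ℝ} {s : Set α}, MeasurableSet s → (∀ x ∈ s, 0 ≤ φ x) →
      (∀ x ∈ s, φ x ≤ 1) →
      (∀ δ > 0, ∫⁻ x in s, ENNReal.ofReal (φ x ^ δ) ∂μ ≤ ENNReal.ofReal δ⁻¹) →
      eLpNorm (fun x => ENNReal.ofReal (φ x ^ ε)) q (μ.restrict s) ≤ C := by
  rcases eq_or_ne q 0 with rfl | hq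
  · exact ⟨0, by simp⟩
  rcases eq_or_ne q ∞ with rfl | hq'
  · refine ⟨1, ENNReal.one_ne_top, fun hs h0 h1 _ => eLpNormEssSup_le_of_ae_enorm_bound ?_⟩
    exact ae_restrict_of_forall_mem hs fun x hx =>
      ENNReal.ofReal_le_one.2 (Real.rpow_le_one (h0 x hx) (h1 x hx) hε.le)
  · have hp : 0 < q.toReal := ENNReal.toReal_pos hq hq'
    refine ⟨ENNReal.ofReal (ε * q.toReal)⁻¹ ^ (1 / q.toReal),
      ENNReal.rpow_ne_top_of_nonneg (by positivity) ENNReal.ofReal_ne_top,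
      fun {φ s} hs h0 _ hφ => ?_⟩
    rw [eLpNorm_eq_lintegral_rpow_enorm_toReal hq hq']
    gcongr
    refine (setLIntegral_congr_fun hs fun x hx => ?_).trans_le (hφ _ (mul_pos hε hp))
    rw [enorm_eq_self, ENNReal.ofReal_rpow_of_nonneg (Real.rpow_nonneg (h0 x hx) _) hp.le,
      ← Real.rpow_mul (h0 x hx)]

end Lebesgue

theorem Ioi_subset_insert_Ioo_union_Ioi (a b : ℝ) : Ioi a ⊆ insert b (Ioo a b ∪ Ioi b) := by
  grind

theorem Ioo_subset_insert_Ioo_union_Ioo (a b c : ℝ) :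
    Ioo a c ⊆ insert b (Ioo a b ∪ Ioo b c) := by
  grind

/-- The multiplicative measure `du/u` on `(0, ∞)`: the quasi-norm `‖u ^ (-1/q) g(u)‖_q` is the
`L_q` quasi-norm of `g` with respect to it. -/
def logMeasure : Measure ℝ :=
  (volume.restrict (Ioi 0)).withDensity fun u => ENNReal.ofReal u⁻¹

theorem measurable_ofReal_inv : Measurable fun u : ℝ => ENNReal.ofReal u⁻¹ := by fun_prop

theorem logMeasure_absolutelyContinuous : logMeasure ≪ volume.restrict (Ioi 0) :=
  withDensity_absolutelyContinuous _ _

theorem absolutelyContinuous_logMeasure : volume.restrict (Ioi 0) ≪ logMeasure :=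
  withDensity_absolutelyContinuous' measurable_ofReal_inv.aemeasurable
    (ae_restrict_of_forall_mem measurableSet_Ioi fun _ hu =>
      (ENNReal.ofReal_pos.2 (inv_pos.2 hu)).ne')

instance : NullSingletonClass logMeasure :=
  inferInstanceAs (NullSingletonClass (Measure.withDensity _ _))

theorem setLIntegral_logMeasure {s : Set ℝ} (hs : MeasurableSet s) (hs0 : s ⊆ Ioi 0)
    (g : ℝ → ℝ≥0∞) :
    ∫⁻ u in s, g u ∂logMeasure = ∫⁻ u in s, ENNReal.ofReal u⁻¹ * g u := by
  rw [logMeasure, setLIntegral_withDensity_eq_setLIntegral_mul_non_measurable _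
    measurable_ofReal_inv g hs (ae_of_all _ fun _ => ENNReal.ofReal_lt_top),
    Measure.restrict_restrict_of_subset hs0]
  rfl

theorem setLIntegral_Ioo_div_rpow_logMeasure {t ε : ℝ} (ht : 0 < t) (hε : 0 < ε) :
    ∫⁻ u in Ioo 0 t, ENNReal.ofReal ((u / t) ^ ε) ∂logMeasure = ENNReal.ofReal ε⁻¹ := by
  have hint : IntegrableOn (fun u : ℝ => u ^ (ε - 1)) (Ioo 0 t) :=
    (intervalIntegral.integrableOn_Ioo_rpow_iff ht).2 (by linarith)
  calc ∫⁻ u in Ioo 0 t, ENNReal.ofReal ((u / t) ^ ε) ∂logMeasure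
      = ∫⁻ u in Ioo 0 t, ENNReal.ofReal (t ^ (-ε) * u ^ (ε - 1)) := by
        rw [setLIntegral_logMeasure measurableSet_Ioo Ioo_subset_Ioi_self]
        refine setLIntegral_congr_fun measurableSet_Ioo fun u hu => ?_
        have hu0 : 0 < u := hu.1
        rw [← ENNReal.ofReal_mul (by positivity), Real.div_rpow hu0.le ht.le, Real.rpow_neg ht.le,
          Real.rpow_sub_one hu0.ne']
        congr 1
        field_simp
    _ = ENNReal.ofReal (∫ u in Ioo 0 t, t ^ (-ε) * u ^ (ε - 1)) :=
        (ofReal_integral_eq_lintegral_ofReal (hint.const_mul _)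
          (ae_restrict_of_forall_mem measurableSet_Ioo fun _ hu =>
            mul_nonneg (by positivity) (Real.rpow_nonneg hu.1.le _))).symm
    _ = ENNReal.ofReal ε⁻¹ := by
        rw [integral_const_mul, ← integral_Ioc_eq_integral_Ioo,
          ← intervalIntegral.integral_of_le ht.le, integral_rpow (Or.inl (by linarith)),
          sub_add_cancel, Real.zero_rpow hε.ne', Real.rpow_neg ht.le, sub_zero, ← mul_div_assoc,
          inv_mul_cancel₀ (by positivity), one_div]

theorem setLIntegral_Ioi_div_rpow_logMeasure {t ε : ℝ} (ht : 0 < t) (hε : 0 < ε) :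
    ∫⁻ u in Ioi t, ENNReal.ofReal ((t / u) ^ ε) ∂logMeasure = ENNReal.ofReal ε⁻¹ := by
  have hlt : -ε - 1 < -1 := by linarith
  calc ∫⁻ u in Ioi t, ENNReal.ofReal ((t / u) ^ ε) ∂logMeasure
      = ∫⁻ u in Ioi t, ENNReal.ofReal (t ^ ε * u ^ (-ε - 1)) := by
        rw [setLIntegral_logMeasure measurableSet_Ioi (Ioi_subset_Ioi ht.le)]
        refine setLIntegral_congr_fun measurableSet_Ioi fun u hu => ?_
        have hu0 : 0 < u := ht.trans hu
        rw [← ENNReal.ofReal_mul (by positivity), Real.div_rpow ht.le hu0.le,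
          Real.rpow_sub_one hu0.ne', Real.rpow_neg hu0.le]
        congr 1
        field_simp
    _ = ENNReal.ofReal (∫ u in Ioi t, t ^ ε * u ^ (-ε - 1)) :=
        (ofReal_integral_eq_lintegral_ofReal ((integrableOn_Ioi_rpow_of_lt hlt ht).const_mul _)
          (ae_restrict_of_forall_mem measurableSet_Ioi fun _ hu =>
            mul_nonneg (by positivity) (Real.rpow_nonneg (ht.trans hu).le _))).symm
    _ = ENNReal.ofReal ε⁻¹ := by
        rw [integral_const_mul, integral_Ioi_rpow_of_lt hlt ht, sub_add_cancel, Real.rpow_neg ht.le,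
          neg_div_neg_eq, ← mul_div_assoc, mul_inv_cancel₀ (by positivity), one_div]

theorem logMeasure_Ioo {a b : ℝ} (ha : 0 < a) (hab : a ≤ b) :
    logMeasure (Ioo a b) = ENNReal.ofReal (Real.log (b / a)) := by
  have hpos : ∀ u ∈ Ioo a b, 0 < u := fun u hu => ha.trans hu.1
  have hint : IntegrableOn (fun u : ℝ => u⁻¹) (Icc a b) :=
    (continuousOn_inv₀.mono fun _ hu => (ha.trans_le hu.1).ne').integrableOn_Icc
  rw [← setLIntegral_one, setLIntegral_logMeasure measurableSet_Ioo hpos]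
  simp only [mul_one]
  rw [← ofReal_integral_eq_lintegral_ofReal (hint.mono_set Ioo_subset_Icc_self)
      (ae_restrict_of_forall_mem measurableSet_Ioo fun u hu => (inv_pos.2 (hpos u hu)).le),
    ← integral_Ioc_eq_integral_Ioo, ← intervalIntegral.integral_of_le hab,
    integral_inv_of_pos ha (ha.trans_le hab)]

theorem LqNorm_rpow_mul_eq_eLpNorm {q : ℝ≥0∞} (hq : q ≠ 0) {s : Set ℝ} (hs : MeasurableSet s)
    (hs0 : s ⊆ Ioi 0) (g : ℝ → ℝ≥0∞) :
    LqNorm q s (fun u => ENNReal.ofReal (u ^ (-(q⁻¹.toReal))) * g u) =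
      eLpNorm g q (logMeasure.restrict s) := by
  have hvol : (volume.restrict (Ioi (0 : ℝ))).restrict s = volume.restrict s :=
    Measure.restrict_restrict_of_subset hs0
  rw [LqNorm]
  split_ifs with h
  · subst h
    simp only [ENNReal.inv_top, ENNReal.toReal_zero, neg_zero, Real.rpow_zero,
      ENNReal.ofReal_one, one_mul, eLpNorm_exponent_top, eLpNormEssSup, enorm_eq_self]
    rw [← hvol]
    exact le_antisymm (essSup_mono_measure (absolutelyContinuous_logMeasure.restrict s))
      (essSup_mono_measure (logMeasure_absolutelyContinuous.restrict s))
  · have hp : 0 < q.toReal := ENNReal.toReal_pos hq h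
    rw [eLpNorm_eq_lintegral_rpow_enorm_toReal hq h, setLIntegral_logMeasure hs hs0, one_div,
      ENNReal.toReal_inv]
    congr 1
    refine setLIntegral_congr_fun hs fun u hu => ?_
    rw [enorm_eq_self, ENNReal.mul_rpow_of_nonneg _ _ hp.le,
      ENNReal.ofReal_rpow_of_pos (Real.rpow_pos_of_pos (hs0 hu) _), ← Real.rpow_mul (hs0 hu).le,
      neg_mul, inv_mul_cancel₀ hp.ne', Real.rpow_neg_one]

/-! ### Power growth, power decay and slow variation -/

theorem exists_le_mul_eLpNorm_Ioo_half {q : ℝ≥0∞} (hq : q ≠ 0) : ∃ C : ℝ≥0∞, C ≠ ∞ ∧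
    ∀ ⦃t : ℝ⦄, 0 < t → ∀ ⦃M c : ℝ≥0∞⦄ ⦃g : ℝ → ℝ≥0∞⦄, AEMeasurable g logMeasure →
      (∀ u ∈ Ioo (t / 2) t, M ≤ c * g u) →
      M ≤ C * c * eLpNorm g q (logMeasure.restrict (Ioo (t / 2) t)) := by
  have hlog : 0 < ENNReal.ofReal (Real.log 2) := ENNReal.ofReal_pos.2 (Real.log_pos one_lt_two)
  set m := ENNReal.ofReal (Real.log 2) ^ (1 / q.toReal)
  have hm0 : m ≠ 0 := (ENNReal.rpow_pos hlog ENNReal.ofReal_ne_top).ne'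
  have hm1 : m ≠ ∞ := ENNReal.rpow_ne_top_of_nonneg (by positivity) ENNReal.ofReal_ne_top
  refine ⟨m⁻¹, ENNReal.inv_ne_top.2 hm0, fun t ht M c g hgm hg => ?_⟩
  have hμ : logMeasure (Ioo (t / 2) t) = ENNReal.ofReal (Real.log 2) := by
    rw [logMeasure_Ioo (by positivity) (by linarith)]
    congr 2
    field_simp
  calc M = m⁻¹ * eLpNorm (fun _ => M) q (logMeasure.restrict (Ioo (t / 2) t)) := by
        rw [eLpNorm_const M hq (by simp [Measure.restrict_eq_zero, hμ, hlog.ne']),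
          Measure.restrict_apply_univ, hμ, enorm_eq_self, mul_comm M, ← mul_assoc,
          ENNReal.inv_mul_cancel hm0 hm1, one_mul]
    _ ≤ m⁻¹ * (c * eLpNorm g q (logMeasure.restrict (Ioo (t / 2) t))) := by
        gcongr
        exact eLpNorm_restrict_le_mul measurableSet_Ioo hgm hg
    _ = _ := (mul_assoc _ _ _).symm

/-- `w u / u ^ α` is equivalent to a non-decreasing function of `u > 0`. -/
def PowerGrowth (α : ℝ) (w : ℝ → ℝ≥0∞) : Prop :=
  ∃ C : ℝ≥0∞, C ≠ ∞ ∧ ∀ ⦃u t : ℝ⦄, 0 < u → u ≤ t → w u ≤ C * ENNReal.ofReal ((u / t) ^ α) * w t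

/-- `u ^ α * w u` is equivalent to a non-increasing function of `u > 0`. -/
def PowerDecay (α : ℝ) (w : ℝ → ℝ≥0∞) : Prop :=
  ∃ C : ℝ≥0∞, C ≠ ∞ ∧ ∀ ⦃u t : ℝ⦄, 0 < u → u ≤ t → w t ≤ C * ENNReal.ofReal ((u / t) ^ α) * w u

theorem ofReal_rpow_add {x : ℝ} (hx : 0 < x) (α β : ℝ) :
    ENNReal.ofReal (x ^ (α + β)) = ENNReal.ofReal (x ^ α) * ENNReal.ofReal (x ^ β) := by
  rw [Real.rpow_add hx, ENNReal.ofReal_mul (by positivity)]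

theorem rpow_le_rpow_neg_abs {a x : ℝ} (ha : 0 < a) (hx : x ∈ Icc a 1) (α : ℝ) :
    x ^ α ≤ a ^ (-|α|) :=
  calc x ^ α ≤ x ^ (-|α|) :=
        Real.rpow_le_rpow_of_exponent_ge (ha.trans_le hx.1) hx.2 (neg_abs_le α)
    _ ≤ a ^ (-|α|) := Real.rpow_le_rpow_of_nonpos ha hx.1 (neg_nonpos.2 (abs_nonneg α))

theorem inv_le_mul_inv_of_le_mul {a b c : ℝ≥0∞} (hc0 : c ≠ 0) (hc : c ≠ ∞) (h : a ≤ c * b) :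
    b⁻¹ ≤ c * a⁻¹ :=
  calc b⁻¹ = c * (c * b)⁻¹ := by
        rw [ENNReal.mul_inv (Or.inl hc0) (Or.inl hc), ← mul_assoc, ENNReal.mul_inv_cancel hc0 hc,
          one_mul]
    _ ≤ c * a⁻¹ := by gcongr

section PowerGrowth

variable {α β : ℝ} {v w : ℝ → ℝ≥0∞}

theorem powerDecay_zero_of_antitone (hw : Antitone w) : PowerDecay 0 w :=
  ⟨1, ENNReal.one_ne_top, fun u t _ h => by simpa using hw h⟩

theorem PowerGrowth.mul (hv : PowerGrowth α v) (hw : PowerGrowth β w) :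
    PowerGrowth (α + β) fun u => v u * w u := by
  obtain ⟨A, hA, hv⟩ := hv
  obtain ⟨B, hB, hw⟩ := hw
  refine ⟨A * B, ENNReal.mul_ne_top hA hB, fun u t hu hut => (mul_le_mul' (hv hu hut)
    (hw hu hut)).trans_eq ?_⟩
  rw [ofReal_rpow_add (div_pos hu (hu.trans_le hut))]
  ring

theorem PowerGrowth.inv (hw : PowerGrowth α w) : PowerDecay α fun u => (w u)⁻¹ := by
  obtain ⟨C, hC, hw⟩ := hw
  refine ⟨C + 1, by finiteness, fun u t hu hut => inv_le_mul_inv_of_le_mul ?_ (by finiteness)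
    ((hw hu hut).trans (by gcongr; exact le_self_add))⟩
  have : 0 < (u / t) ^ α := Real.rpow_pos_of_pos (div_pos hu (hu.trans_le hut)) α
  simp [this]

theorem PowerDecay.inv (hw : PowerDecay α w) : PowerGrowth α fun u => (w u)⁻¹ := by
  obtain ⟨C, hC, hw⟩ := hw
  refine ⟨C + 1, by finiteness, fun u t hu hut => inv_le_mul_inv_of_le_mul ?_ (by finiteness)
    ((hw hu hut).trans (by gcongr; exact le_self_add))⟩
  have : 0 < (u / t) ^ α := Real.rpow_pos_of_pos (div_pos hu (hu.trans_le hut)) α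
  simp [this]

theorem PowerGrowth.div (hv : PowerGrowth α v) (hw : PowerDecay β w) :
    PowerGrowth (α + β) fun u => v u / w u := by
  simpa only [div_eq_mul_inv] using hv.mul hw.inv

theorem PowerGrowth.exists_eLpNorm_Ioo_le (hw : PowerGrowth α w) (hα : 0 < α) (q : ℝ≥0∞) :
    ∃ C : ℝ≥0∞, C ≠ ∞ ∧ ∀ ⦃t : ℝ⦄, 0 < t →
      eLpNorm w q (logMeasure.restrict (Ioo 0 t)) ≤ C * w t := by
  obtain ⟨C, hC, hw⟩ := hw
  obtain ⟨D, hD, H⟩ := exists_eLpNorm_ofReal_rpow_le logMeasure q hα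
  refine ⟨D * C, by finiteness, fun t ht => ?_⟩
  calc eLpNorm w q (logMeasure.restrict (Ioo 0 t))
      ≤ C * w t * eLpNorm (fun u => ENNReal.ofReal ((u / t) ^ α)) q
          (logMeasure.restrict (Ioo 0 t)) :=
        eLpNorm_restrict_le_mul measurableSet_Ioo (by fun_prop) fun u hu =>
          (hw hu.1 hu.2.le).trans_eq (by ring)
    _ ≤ C * w t * D := by
        gcongr
        exact H measurableSet_Ioo (fun u hu => div_nonneg hu.1.le ht.le)
          (fun u hu => (div_le_one ht).2 hu.2.le)
          fun δ hδ => (setLIntegral_Ioo_div_rpow_logMeasure ht hδ).le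
    _ = D * C * w t := by ring

theorem PowerDecay.exists_eLpNorm_Ioi_le (hw : PowerDecay α w) (hα : 0 < α) (q : ℝ≥0∞) :
    ∃ C : ℝ≥0∞, C ≠ ∞ ∧ ∀ ⦃t : ℝ⦄, 0 < t →
      eLpNorm w q (logMeasure.restrict (Ioi t)) ≤ C * w t := by
  obtain ⟨C, hC, hw⟩ := hw
  obtain ⟨D, hD, H⟩ := exists_eLpNorm_ofReal_rpow_le logMeasure q hα
  refine ⟨D * C, by finiteness, fun t ht => ?_⟩
  calc eLpNorm w q (logMeasure.restrict (Ioi t))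
      ≤ C * w t * eLpNorm (fun u => ENNReal.ofReal ((t / u) ^ α)) q
          (logMeasure.restrict (Ioi t)) :=
        eLpNorm_restrict_le_mul measurableSet_Ioi (by fun_prop) fun u hu =>
          (hw ht (le_of_lt hu)).trans_eq (by ring)
    _ ≤ C * w t * D := by
        gcongr
        exact H measurableSet_Ioi (fun u hu => div_nonneg ht.le (ht.trans hu).le)
          (fun u hu => (div_le_one (ht.trans hu)).2 (le_of_lt hu))
          fun δ hδ => (setLIntegral_Ioi_div_rpow_logMeasure ht hδ).le
    _ = D * C * w t := by ring

end PowerGrowth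

/-- A weight on `(0, ∞)`: a measurable function with positive finite values there. -/
structure IsWeight (w : ℝ → ℝ≥0∞) : Prop where
  aemeasurable : AEMeasurable w logMeasure
  ne_zero : ∀ ⦃t⦄, 0 < t → w t ≠ 0
  ne_top : ∀ ⦃t⦄, 0 < t → w t ≠ ∞

theorem IsWeight.div {v w : ℝ → ℝ≥0∞} (hv : IsWeight v) (hw : IsWeight w) :
    IsWeight fun u => v u / w u where
  aemeasurable := hv.aemeasurable.div hw.aemeasurable
  ne_zero _ ht := ENNReal.div_ne_zero.2 ⟨hv.ne_zero ht, hw.ne_top ht⟩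
  ne_top _ ht := ENNReal.div_ne_top (hv.ne_top ht) (hw.ne_zero ht)

theorem EquivOn.exists_le_mul {s : Set ℝ} {f g : ℝ → ℝ} (h : EquivOn s f g) :
    ∃ C : ℝ, 0 < C ∧ ∀ x ∈ s, ∀ y ∈ s, g x ≤ g y → f x ≤ C * f y := by
  obtain ⟨C, hC, h⟩ := h
  refine ⟨C * C, mul_pos hC hC, fun x hx y hy hxy => ?_⟩
  calc f x ≤ C * g y := (h x hx).2.trans (by gcongr)
    _ = C * C * (C⁻¹ * g y) := by field_simp
    _ ≤ C * C * f y := by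
        gcongr
        exact (h y hy).1

/-- The weight `u ↦ u ^ (-θ) b(u)` of the space `Ā_{θ,q;b}`, relative to `du/u`. -/
def svWeight (θ : ℝ) (b : ℝ → ℝ) (u : ℝ) : ℝ≥0∞ := ENNReal.ofReal (u ^ (-θ) * b u)

namespace SlowlyVarying

variable {b : ℝ → ℝ} {α θ : ℝ}

theorem isWeight (hb : SlowlyVarying b) (θ : ℝ) : IsWeight (svWeight θ b) where
  aemeasurable := by
    have hpow : Measurable fun u : ℝ => u ^ (-θ) := by fun_prop
    exact ((hpow.aemeasurable.mul hb.1).mono_ac logMeasure_absolutelyContinuous).ennreal_ofReal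
  ne_zero t ht := (ENNReal.ofReal_pos.2 (mul_pos (Real.rpow_pos_of_pos ht _) (hb.2.1 t ht))).ne'
  ne_top _ _ := ENNReal.ofReal_ne_top

theorem powerGrowth (hb : SlowlyVarying b) (hα : α < -θ) : PowerGrowth α (svWeight θ b) := by
  obtain ⟨g, hg, hbg⟩ := (hb.2.2 (-θ - α) (by linarith)).1
  obtain ⟨C, hC, H⟩ := hbg.exists_le_mul
  refine ⟨ENNReal.ofReal C, ENNReal.ofReal_ne_top, fun u t hu hut => ?_⟩
  have ht := hu.trans_le hut
  have hmono : u ^ (-θ - α) * b u ≤ C * (t ^ (-θ - α) * b t) := H u hu t ht (hg hu ht hut)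
  rw [svWeight, svWeight, ← ENNReal.ofReal_mul hC.le,
    ← ENNReal.ofReal_mul (by positivity)]
  refine ENNReal.ofReal_le_ofReal ?_
  calc u ^ (-θ) * b u = u ^ α * (u ^ (-θ - α) * b u) := by
        rw [← mul_assoc, ← Real.rpow_add hu, add_sub_cancel]
    _ ≤ u ^ α * (C * (t ^ (-θ - α) * b t)) := by gcongr
    _ = C * (u / t) ^ α * (t ^ (-θ) * b t) := by
        rw [Real.rpow_sub ht, Real.div_rpow hu.le ht.le]
        ring

theorem powerDecay (hb : SlowlyVarying b) (hα : α < θ) : PowerDecay α (svWeight θ b) := by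
  obtain ⟨g, hg, hbg⟩ := (hb.2.2 (θ - α) (by linarith)).2
  obtain ⟨C, hC, H⟩ := hbg.exists_le_mul
  refine ⟨ENNReal.ofReal C, ENNReal.ofReal_ne_top, fun u t hu hut => ?_⟩
  have ht := hu.trans_le hut
  have hanti : t ^ (-(θ - α)) * b t ≤ C * (u ^ (-(θ - α)) * b u) := H t ht u hu (hg hu ht hut)
  rw [svWeight, svWeight, ← ENNReal.ofReal_mul hC.le,
    ← ENNReal.ofReal_mul (by positivity)]
  refine ENNReal.ofReal_le_ofReal ?_
  calc t ^ (-θ) * b t = t ^ (-α) * (t ^ (-(θ - α)) * b t) := by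
        rw [← mul_assoc, ← Real.rpow_add ht]
        ring_nf
    _ ≤ t ^ (-α) * (C * (u ^ (-(θ - α)) * b u)) := by gcongr
    _ = C * (u / t) ^ α * (u ^ (-θ) * b u) := by
        rw [neg_sub, sub_eq_add_neg, Real.rpow_add hu, Real.div_rpow hu.le ht.le,
          Real.rpow_neg ht.le]
        ring

end SlowlyVarying

/-! ### Weighted quasi-norms of quasi-concave functions -/

/-- The class of functions which the Peetre K-functional `u ↦ K(u, f)` belongs to: `k` is
non-decreasing and, on `(0, ∞)`, `k(u) / u` is non-increasing. -/
structure QuasiConcave (k : ℝ → ℝ≥0∞) : Prop where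
  monotone : Monotone k
  le_div_mul : ∀ ⦃u t : ℝ⦄, 0 < u → u ≤ t → k t ≤ ENNReal.ofReal (t / u) * k u

theorem QuasiConcave.div_mul_le {k : ℝ → ℝ≥0∞} (hk : QuasiConcave k) {u t : ℝ} (hu : 0 < u)
    (hut : u ≤ t) : ENNReal.ofReal (u / t) * k t ≤ k u := by
  have ht : 0 < t := hu.trans_le hut
  calc ENNReal.ofReal (u / t) * k t
      ≤ ENNReal.ofReal (u / t) * (ENNReal.ofReal (t / u) * k u) :=
        mul_le_mul_right (hk.le_div_mul hu hut) _
    _ = k u := by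
        rw [← mul_assoc, ← ENNReal.ofReal_mul (by positivity), div_mul_div_cancel₀ ht.ne',
          div_self hu.ne', ENNReal.ofReal_one, one_mul]

theorem QuasiConcave.le_two_mul {k : ℝ → ℝ≥0∞} (hk : QuasiConcave k) {u t : ℝ} (ht : 0 < t)
    (hu : t / 2 ≤ u) : k t ≤ 2 * k u := by
  have hu0 : 0 < u := by linarith
  rcases le_total u t with hut | hut
  · refine (hk.le_div_mul hu0 hut).trans (mul_le_mul' ?_ le_rfl)
    rw [← ENNReal.ofReal_ofNat 2]
    refine ENNReal.ofReal_le_ofReal ((div_le_iff₀ hu0).2 (by linarith))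
  · exact (hk.monotone hut).trans (le_mul_of_one_le_left' one_le_two)

/-- The quasi-norm `‖u ^ (-1/q) w(u) k(u)‖_q` over the set `s`. -/
def weightedNorm (q : ℝ≥0∞) (w : ℝ → ℝ≥0∞) (s : Set ℝ) (k : ℝ → ℝ≥0∞) : ℝ≥0∞ :=
  eLpNorm (fun u => w u * k u) q (logMeasure.restrict s)

section weightedNorm

variable {q : ℝ≥0∞} {w k l : ℝ → ℝ≥0∞} {s t : Set ℝ}

theorem weightedNorm_mono (hs : MeasurableSet s) (h : ∀ u ∈ s, k u ≤ l u) :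
    weightedNorm q w s k ≤ weightedNorm q w s l :=
  eLpNorm_restrict_mono hs fun u hu => mul_le_mul_right (h u hu) _

theorem weightedNorm_mono_set (h : s ⊆ t) : weightedNorm q w s k ≤ weightedNorm q w t k :=
  eLpNorm_restrict_mono_set h

theorem weightedNorm_le_mul (hw : AEMeasurable w logMeasure) (hl : Measurable l)
    (hs : MeasurableSet s) {c : ℝ≥0∞} (h : ∀ u ∈ s, k u ≤ c * l u) :
    weightedNorm q w s k ≤ c * weightedNorm q w s l :=
  eLpNorm_restrict_le_mul hs (hw.mul hl.aemeasurable) fun u hu =>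
    (mul_le_mul_right (h u hu) _).trans_eq (mul_left_comm _ _ _)

theorem weightedNorm_add_le (hw : AEMeasurable w logMeasure) (hk : Measurable k)
    (hl : Measurable l) :
    weightedNorm q w s (fun u => k u + l u) ≤
      LpAddConst q * (weightedNorm q w s k + weightedNorm q w s l) := by
  simp only [weightedNorm, mul_add (w _)]
  exact eLpNorm_add_le' (hw.mul hk.aemeasurable).restrict.aestronglyMeasurable
    (hw.mul hl.aemeasurable).restrict.aestronglyMeasurable q

theorem weightedNorm_Ioi_le_add (hw : AEMeasurable w logMeasure) (hk : Measurable k) (a b : ℝ) :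
    weightedNorm q w (Ioi a) k ≤
      LpAddConst q * (weightedNorm q w (Ioo a b) k + weightedNorm q w (Ioi b) k) :=
  eLpNorm_restrict_le_add (hw.mul hk.aemeasurable) measurableSet_Ioo measurableSet_Ioi
    (Ioi_subset_insert_Ioo_union_Ioi a b)

theorem weightedNorm_Ioo_le_add (hw : AEMeasurable w logMeasure) (hk : Measurable k) (a b c : ℝ) :
    weightedNorm q w (Ioo a c) k ≤
      LpAddConst q * (weightedNorm q w (Ioo a b) k + weightedNorm q w (Ioo b c) k) :=
  eLpNorm_restrict_le_add (hw.mul hk.aemeasurable) measurableSet_Ioo measurableSet_Ioo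
    (Ioo_subset_insert_Ioo_union_Ioo a b c)

theorem measurable_weightedNorm_Ioo (q : ℝ≥0∞) (w k : ℝ → ℝ≥0∞) (a : ℝ) :
    Measurable fun s => weightedNorm q w (Ioo a s) k :=
  Monotone.measurable fun _ _ h => weightedNorm_mono_set (Ioo_subset_Ioo_right h)

end weightedNorm

theorem PowerDecay.exists_mul_le_weightedNorm {α : ℝ} {w : ℝ → ℝ≥0∞} (hw : PowerDecay α w)
    (hwm : AEMeasurable w logMeasure) {q : ℝ≥0∞} (hq : q ≠ 0) :
    ∃ C : ℝ≥0∞, C ≠ ∞ ∧ ∀ ⦃t : ℝ⦄, 0 < t → ∀ ⦃k⦄, QuasiConcave k →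
      w t * k t ≤ C * weightedNorm q w (Ioo 0 t) k := by
  obtain ⟨A, hA, hw⟩ := hw
  obtain ⟨D, hD, H⟩ := exists_le_mul_eLpNorm_Ioo_half hq
  set B := ENNReal.ofReal ((1 / 2 : ℝ) ^ (-|α|))
  refine ⟨D * (A * B * 2), by finiteness, fun t ht k hk => ?_⟩
  have hbound : ∀ u ∈ Ioo (t / 2) t, w t * k t ≤ A * B * 2 * (w u * k u) := fun u hu => by
    have hx : u / t ∈ Icc (1 / 2) 1 :=
      ⟨(le_div_iff₀ ht).2 (by linarith [hu.1]), (div_le_one ht).2 hu.2.le⟩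
    calc w t * k t ≤ A * ENNReal.ofReal ((u / t) ^ α) * w u * (2 * k u) :=
          mul_le_mul' (hw (by linarith [hu.1]) hu.2.le) (hk.le_two_mul ht hu.1.le)
      _ ≤ A * B * w u * (2 * k u) := by
          gcongr
          exact ENNReal.ofReal_le_ofReal (rpow_le_rpow_neg_abs one_half_pos hx α)
      _ = _ := by ring
  refine (H ht (hwm.mul hk.monotone.measurable.aemeasurable) hbound).trans ?_
  gcongr
  exact eLpNorm_restrict_mono_set (Ioo_subset_Ioo_left (by positivity))

/-- The function `t ↦ ‖s ^ (-1/r) d(s)‖_{r,(t,∞)}`. -/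
def tailNorm (r : ℝ≥0∞) (d : ℝ → ℝ≥0∞) (t : ℝ) : ℝ≥0∞ :=
  eLpNorm d r (logMeasure.restrict (Ioi t))

section tailNorm

variable {α : ℝ} {d : ℝ → ℝ≥0∞} {r : ℝ≥0∞}

theorem tailNorm_antitone (r : ℝ≥0∞) (d : ℝ → ℝ≥0∞) : Antitone (tailNorm r d) :=
  fun _ _ h => eLpNorm_restrict_mono_set (Ioi_subset_Ioi h)

theorem PowerGrowth.exists_le_tailNorm (hd : PowerGrowth α d) (hdm : AEMeasurable d logMeasure)
    (hr : r ≠ 0) : ∃ C : ℝ≥0∞, C ≠ ∞ ∧ ∀ ⦃t : ℝ⦄, 0 < t → d t ≤ C * tailNorm r d t := by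
  obtain ⟨A, hA, hd⟩ := hd
  obtain ⟨D, hD, H⟩ := exists_le_mul_eLpNorm_Ioo_half hr
  set B := ENNReal.ofReal ((1 / 2 : ℝ) ^ (-|α|))
  refine ⟨D * (A * B), by finiteness, fun t ht => ?_⟩
  have hbound : ∀ u ∈ Ioo (2 * t / 2) (2 * t), d t ≤ A * B * d u := fun u hu => by
    have htu : t < u := by linarith [hu.1]
    have hx : t / u ∈ Icc (1 / 2) 1 :=
      ⟨(le_div_iff₀ (ht.trans htu)).2 (by linarith [hu.2]), (div_le_one (ht.trans htu)).2 htu.le⟩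
    refine (hd ht htu.le).trans ?_
    gcongr
    exact ENNReal.ofReal_le_ofReal (rpow_le_rpow_neg_abs one_half_pos hx α)
  refine (H (by positivity) hdm hbound).trans ?_
  gcongr
  exact eLpNorm_restrict_mono_set fun u hu => show t < u by linarith [hu.1]

theorem PowerGrowth.tailNorm_ne_zero (hd : PowerGrowth α d) (hdw : IsWeight d) (hr : r ≠ 0)
    {t : ℝ} (ht : 0 < t) : tailNorm r d t ≠ 0 := fun h0 => by
  obtain ⟨C, -, H⟩ := hd.exists_le_tailNorm hdw.aemeasurable hr
  exact hdw.ne_zero ht (by simpa only [h0, mul_zero, nonpos_iff_eq_zero] using H ht)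

theorem PowerGrowth.tailNorm_ne_top (hd : PowerGrowth α d) (hdw : IsWeight d) {t₀ : ℝ}
    (ht₀ : 0 < t₀) (hfin : tailNorm r d t₀ ≠ ∞) {t : ℝ} (ht : 0 < t) : tailNorm r d t ≠ ∞ := by
  obtain ⟨C, hC, hd⟩ := hd
  rcases le_total t₀ t with h | h
  · exact ne_top_of_le_ne_top hfin (tailNorm_antitone r d h)
  have hbound : eLpNorm d r (logMeasure.restrict (Ioo t t₀)) ≠ ∞ := by
    have hle : ∀ u ∈ Ioo t t₀, d u ≤ C * ENNReal.ofReal ((t / t₀) ^ (-|α|)) * d t₀ :=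
      fun u hu => (hd (ht.trans hu.1) hu.2.le).trans <| by
        gcongr
        refine rpow_le_rpow_neg_abs (by positivity) ⟨?_, (div_le_one ht₀).2 hu.2.le⟩ α
        exact div_le_div_of_nonneg_right hu.1.le ht₀.le
    refine ne_top_of_le_ne_top ?_
      (eLpNorm_le_of_ae_enorm_bound (ae_restrict_of_forall_mem measurableSet_Ioo hle))
    rw [Measure.restrict_apply_univ, logMeasure_Ioo ht h, smul_eq_mul]
    have hd₀ := hdw.ne_top ht₀
    finiteness
  refine ne_top_of_le_ne_top ?_ (eLpNorm_restrict_le_add hdw.aemeasurable measurableSet_Ioo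
    measurableSet_Ioi (Ioi_subset_insert_Ioo_union_Ioi t t₀))
  exact ENNReal.mul_ne_top (LpAddConst_lt_top r).ne (ENNReal.add_ne_top.2 ⟨hbound, hfin⟩)

end tailNorm

/-- The quasi-norm `‖s ^ (-1/r) d(s) ‖u ^ (-1/q) w(u) k(u)‖_{q,(c,s)}‖_{r,(c,∞)}`; `c = 0` gives the
quasi-norm of an 𝓛-space. -/
def nestedNorm (r q : ℝ≥0∞) (d w : ℝ → ℝ≥0∞) (c : ℝ) (k : ℝ → ℝ≥0∞) : ℝ≥0∞ :=
  weightedNorm r d (Ioi c) fun s => weightedNorm q w (Ioo c s) k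

/-- The change of variable `ρ` of Holmstedt's formula, for the weights `w₀ = u ^ (-θ₀) b₀`,
`w₁ = u ^ (-θ₁) a₁` and `d = b₁ / a₁`. -/
def holmstedtRho (r : ℝ≥0∞) (w₀ w₁ d : ℝ → ℝ≥0∞) (t : ℝ) : ℝ≥0∞ :=
  w₀ t / w₁ t / tailNorm r d t

section Estimates

variable {w w₀ w₁ d : ℝ → ℝ≥0∞} {q r r₀ : ℝ≥0∞} {α γ ε : ℝ}

theorem nestedNorm_le_nestedNorm_zero {t : ℝ} (ht : 0 ≤ t) (k : ℝ → ℝ≥0∞) :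
    nestedNorm r q d w t k ≤ nestedNorm r q d w 0 k :=
  (weightedNorm_mono measurableSet_Ioi fun _ _ =>
    weightedNorm_mono_set (Ioo_subset_Ioo_left ht)).trans
    (weightedNorm_mono_set (Ioi_subset_Ioi ht))

theorem nestedNorm_le_mul (hd : AEMeasurable d logMeasure) (hw : AEMeasurable w logMeasure)
    {k l : ℝ → ℝ≥0∞} (hl : Measurable l) {c : ℝ} {C : ℝ≥0∞} (h : ∀ u ∈ Ioi c, k u ≤ C * l u) :
    nestedNorm r q d w c k ≤ C * nestedNorm r q d w c l :=
  weightedNorm_le_mul hd (measurable_weightedNorm_Ioo q w l c) measurableSet_Ioi fun _ _ =>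
    weightedNorm_le_mul hw hl measurableSet_Ioo fun u hu => h u hu.1

theorem nestedNorm_add_le (hd : AEMeasurable d logMeasure) (hw : AEMeasurable w logMeasure)
    {k l : ℝ → ℝ≥0∞} (hk : Measurable k) (hl : Measurable l) (c : ℝ) :
    nestedNorm r q d w c (fun u => k u + l u) ≤
      LpAddConst q * LpAddConst r * (nestedNorm r q d w c k + nestedNorm r q d w c l) := by
  have hk' := measurable_weightedNorm_Ioo q w k c
  have hl' := measurable_weightedNorm_Ioo q w l c
  calc nestedNorm r q d w c (fun u => k u + l u)
      ≤ LpAddConst q * weightedNorm r d (Ioi c)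
          (fun s => weightedNorm q w (Ioo c s) k + weightedNorm q w (Ioo c s) l) :=
        weightedNorm_le_mul hd (hk'.add hl') measurableSet_Ioi fun _ _ =>
          weightedNorm_add_le hw hk hl
    _ ≤ LpAddConst q * (LpAddConst r * (nestedNorm r q d w c k + nestedNorm r q d w c l)) := by
        gcongr
        exact weightedNorm_add_le hd hk' hl'
    _ = _ := (mul_assoc _ _ _).symm

theorem tailNorm_mul_le_weightedNorm (hd : AEMeasurable d logMeasure) {t : ℝ} {c : ℝ≥0∞}
    {k : ℝ → ℝ≥0∞} (h : ∀ u ∈ Ioi t, c ≤ k u) :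
    c * tailNorm r d t ≤ weightedNorm r d (Ioi t) k :=
  (mul_eLpNorm_le hd.restrict c).trans <| eLpNorm_restrict_mono measurableSet_Ioi fun u hu =>
    (mul_comm _ _).trans_le (mul_le_mul_right (h u hu) _)

theorem weightedNorm_le_mul_tailNorm (hd : AEMeasurable d logMeasure) {t : ℝ} {c : ℝ≥0∞}
    {k : ℝ → ℝ≥0∞} (h : ∀ u ∈ Ioi t, k u ≤ c) :
    weightedNorm r d (Ioi t) k ≤ c * tailNorm r d t :=
  eLpNorm_restrict_le_mul measurableSet_Ioi hd fun u hu =>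
    (mul_comm _ _).trans_le (mul_le_mul_left (h u hu) _)

theorem PowerDecay.exists_mul_tailNorm_le_nestedNorm (h₁ : PowerDecay α w)
    (hw : AEMeasurable w logMeasure) (hd : AEMeasurable d logMeasure) (hq : q ≠ 0) :
    ∃ C : ℝ≥0∞, C ≠ ∞ ∧ ∀ ⦃t : ℝ⦄, 0 < t → ∀ ⦃k⦄, QuasiConcave k →
      w t * k t * tailNorm r d t ≤ C * nestedNorm r q d w 0 k := by
  obtain ⟨C, hC, H⟩ := h₁.exists_mul_le_weightedNorm hw hq
  refine ⟨C, hC, fun t ht k hk => ?_⟩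
  calc w t * k t * tailNorm r d t
      ≤ C * (weightedNorm q w (Ioo 0 t) k * tailNorm r d t) := by
        rw [← mul_assoc]
        exact mul_le_mul_left (H ht hk) _
    _ ≤ C * weightedNorm r d (Ioi t) (fun s => weightedNorm q w (Ioo 0 s) k) := by
        gcongr
        exact tailNorm_mul_le_weightedNorm hd fun s hs =>
          weightedNorm_mono_set (Ioo_subset_Ioo_right (le_of_lt hs))
    _ ≤ C * nestedNorm r q d w 0 k := by
        gcongr
        exact weightedNorm_mono_set (Ioi_subset_Ioi ht.le)

theorem holmstedtRho_mul {t : ℝ} (h₁ : w₁ t ≠ 0) (h₁' : w₁ t ≠ ∞) (hR : tailNorm r d t ≠ 0)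
    (hR' : tailNorm r d t ≠ ∞) :
    holmstedtRho r w₀ w₁ d t * (w₁ t * tailNorm r d t) = w₀ t := by
  rw [holmstedtRho, mul_comm (w₁ t), ← mul_assoc, ENNReal.div_mul_cancel hR hR',
    ENNReal.div_mul_cancel h₁ h₁']

theorem IsWeight.tailNorm (hd : IsWeight d) (hγ : PowerGrowth γ d) (hr : r ≠ 0)
    (hfin : tailNorm r d 1 ≠ ∞) : IsWeight (tailNorm r d) where
  aemeasurable := (tailNorm_antitone r d).measurable.aemeasurable
  ne_zero _ ht := hγ.tailNorm_ne_zero hd hr ht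
  ne_top _ ht := hγ.tailNorm_ne_top hd one_pos hfin ht

theorem exists_weightedNorm_Ioo_le_holmstedtRho_mul (hw₀ : IsWeight w₀) (hw₁ : IsWeight w₁)
    (hd : AEMeasurable d logMeasure) (hR : IsWeight (tailNorm r d)) (hq : q ≠ 0)
    (h₁ : PowerDecay α w₁) (hε : 0 < ε) (h₀₁ : PowerGrowth ε fun u => w₀ u / w₁ u) (r₀ : ℝ≥0∞) :
    ∃ C : ℝ≥0∞, C ≠ ∞ ∧ ∀ ⦃t : ℝ⦄, 0 < t → ∀ ⦃k⦄, QuasiConcave k →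
      weightedNorm r₀ w₀ (Ioo 0 t) k ≤
        C * (holmstedtRho r w₀ w₁ d t * nestedNorm r q d w₁ 0 k) := by
  have hρ : PowerGrowth (ε + 0) (holmstedtRho r w₀ w₁ d) :=
    h₀₁.div (powerDecay_zero_of_antitone (tailNorm_antitone r d))
  obtain ⟨A, hA, HA⟩ := h₁.exists_mul_tailNorm_le_nestedNorm hw₁.aemeasurable hd (r := r) hq
  obtain ⟨B, hB, HB⟩ := hρ.exists_eLpNorm_Ioo_le (by linarith) r₀
  refine ⟨A * B, by finiteness, fun t ht k hk => ?_⟩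
  have hpt : ∀ u ∈ Ioo 0 t,
      w₀ u * k u ≤ A * nestedNorm r q d w₁ 0 k * holmstedtRho r w₀ w₁ d u := fun u ⟨hu, _⟩ => by
    have hw : holmstedtRho r w₀ w₁ d u * (w₁ u * tailNorm r d u) = w₀ u :=
      holmstedtRho_mul (hw₁.ne_zero hu) (hw₁.ne_top hu) (hR.ne_zero hu) (hR.ne_top hu)
    calc w₀ u * k u = holmstedtRho r w₀ w₁ d u * (w₁ u * tailNorm r d u) * k u := by rw [hw]
      _ = w₁ u * k u * tailNorm r d u * holmstedtRho r w₀ w₁ d u := by ring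
      _ ≤ _ := mul_le_mul_left (HA hu hk) _
  calc weightedNorm r₀ w₀ (Ioo 0 t) k
      ≤ A * nestedNorm r q d w₁ 0 k *
          eLpNorm (holmstedtRho r w₀ w₁ d) r₀ (logMeasure.restrict (Ioo 0 t)) :=
        eLpNorm_restrict_le_mul measurableSet_Ioo ((hw₀.div hw₁).div hR).aemeasurable hpt
    _ ≤ A * nestedNorm r q d w₁ 0 k * (B * holmstedtRho r w₀ w₁ d t) := by
        gcongr
        exact HB ht
    _ = _ := by ring

theorem exists_holmstedtRho_mul_nestedNorm_le (hw₀ : IsWeight w₀) (hw₁ : IsWeight w₁)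
    (hd : AEMeasurable d logMeasure) (hR : IsWeight (tailNorm r d)) (hr₀ : r₀ ≠ 0)
    (h₀ : PowerDecay α w₀) (hε : 0 < ε) (h₀₁ : PowerGrowth ε fun u => w₀ u / w₁ u) (q : ℝ≥0∞) :
    ∃ C : ℝ≥0∞, C ≠ ∞ ∧ ∀ ⦃t : ℝ⦄, 0 < t → ∀ ⦃k⦄, QuasiConcave k →
      holmstedtRho r w₀ w₁ d t * nestedNorm r q d w₁ t k ≤ C * weightedNorm r₀ w₀ (Ioi 0) k := by
  obtain ⟨A, hA, HA⟩ := h₀.exists_mul_le_weightedNorm hw₀.aemeasurable hr₀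
  obtain ⟨B, hB, HB⟩ := h₀₁.inv.exists_eLpNorm_Ioi_le hε q
  refine ⟨A * B, by finiteness, fun t ht k hk => ?_⟩
  have hv := hw₀.div hw₁
  set X := weightedNorm r₀ w₀ (Ioi 0) k
  have hpt : ∀ u ∈ Ioi t, w₁ u * k u ≤ A * X * (w₀ u / w₁ u)⁻¹ := fun u htu => by
    have hu : 0 < u := ht.trans htu
    calc w₁ u * k u = w₀ u * k u * (w₀ u / w₁ u)⁻¹ := by
          rw [ENNReal.inv_div (Or.inl (hw₁.ne_top hu)) (Or.inl (hw₁.ne_zero hu)), div_eq_mul_inv,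
            mul_right_comm, mul_left_comm, ENNReal.mul_inv_cancel (hw₀.ne_zero hu) (hw₀.ne_top hu),
            mul_one]
      _ ≤ A * X * (w₀ u / w₁ u)⁻¹ := mul_le_mul_left
          ((HA hu hk).trans (mul_le_mul_right (weightedNorm_mono_set Ioo_subset_Ioi_self) _)) _
  have hinner : ∀ s ∈ Ioi t, weightedNorm q w₁ (Ioo t s) k ≤ A * X * (B * (w₀ t / w₁ t)⁻¹) :=
    fun s _ => calc weightedNorm q w₁ (Ioo t s) k
        ≤ weightedNorm q w₁ (Ioi t) k := weightedNorm_mono_set Ioo_subset_Ioi_self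
      _ ≤ A * X * eLpNorm (fun u => (w₀ u / w₁ u)⁻¹) q (logMeasure.restrict (Ioi t)) :=
          eLpNorm_restrict_le_mul measurableSet_Ioi hv.aemeasurable.inv hpt
      _ ≤ A * X * (B * (w₀ t / w₁ t)⁻¹) := by
          gcongr
          exact HB ht
  calc holmstedtRho r w₀ w₁ d t * nestedNorm r q d w₁ t k
      ≤ holmstedtRho r w₀ w₁ d t * (A * X * (B * (w₀ t / w₁ t)⁻¹) * tailNorm r d t) := by
        gcongr
        exact weightedNorm_le_mul_tailNorm hd hinner
    _ = A * B * X * ((w₀ t / w₁ t)⁻¹ * (holmstedtRho r w₀ w₁ d t * tailNorm r d t)) := by ring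
    _ = A * B * X := by
        rw [holmstedtRho, ENNReal.div_mul_cancel (hR.ne_zero ht) (hR.ne_top ht),
          ENNReal.inv_mul_cancel (hv.ne_zero ht) (hv.ne_top ht), mul_one]

end Estimates

/-! ### Low and high parts of a quasi-concave function -/

/-- The part of a quasi-concave function `k` below `t`; it is comparable with the K-functional of
the component in `A₀` of a nearly optimal decomposition for `K(t, f)`. -/
def lowPart (t : ℝ) (k : ℝ → ℝ≥0∞) (u : ℝ) : ℝ≥0∞ := k (min u t)

/-- The part of a quasi-concave function `k` above `t`; it is comparable with the K-functional of
the component in `A₁` of a nearly optimal decomposition for `K(t, f)`. -/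
def highPart (t : ℝ) (k : ℝ → ℝ≥0∞) (u : ℝ) : ℝ≥0∞ := ENNReal.ofReal (u / max u t) * k (max u t)

namespace QuasiConcave

variable {k : ℝ → ℝ≥0∞}

theorem measurable_lowPart (hk : QuasiConcave k) (t : ℝ) : Measurable (lowPart t k) :=
  Monotone.measurable fun _ _ h => hk.monotone (min_le_min_right t h)

theorem measurable_highPart (hk : QuasiConcave k) (t : ℝ) : Measurable (highPart t k) := by
  have hmono : Monotone fun u => k (max u t) := fun _ _ h => hk.monotone (max_le_max_right t h)
  have hdiv : Measurable fun u => ENNReal.ofReal (u / max u t) := by fun_prop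
  exact hdiv.mul hmono.measurable

end QuasiConcave

section Decompositions

variable {w d k : ℝ → ℝ≥0∞} {q r : ℝ≥0∞} {α β γ t : ℝ}

theorem highPart_of_le {u : ℝ} (hut : u ≤ t) :
    highPart t k u = ENNReal.ofReal (u / t) * k t := by
  rw [highPart, max_eq_right hut]

theorem highPart_of_ge {u : ℝ} (ht : 0 < t) (htu : t ≤ u) : highPart t k u = k u := by
  rw [highPart, max_eq_left htu, div_self (ht.trans_le htu).ne', ENNReal.ofReal_one, one_mul]

theorem PowerDecay.exists_weightedNorm_lowPart_le (h₀ : PowerDecay α w) (hα : 0 < α)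
    (hw : AEMeasurable w logMeasure) (hq : q ≠ 0) :
    ∃ C : ℝ≥0∞, C ≠ ∞ ∧ ∀ ⦃t : ℝ⦄, 0 < t → ∀ ⦃k⦄, QuasiConcave k →
      weightedNorm q w (Ioi 0) (lowPart t k) ≤ C * weightedNorm q w (Ioo 0 t) k := by
  obtain ⟨A, hA, HA⟩ := h₀.exists_eLpNorm_Ioi_le hα q
  obtain ⟨B, hB, HB⟩ := h₀.exists_mul_le_weightedNorm hw hq
  refine ⟨LpAddConst q * (1 + A * B), ENNReal.mul_ne_top (LpAddConst_lt_top q).ne (by finiteness),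
    fun t ht k hk => ?_⟩
  have hsmall : weightedNorm q w (Ioo 0 t) (lowPart t k) ≤ weightedNorm q w (Ioo 0 t) k :=
    weightedNorm_mono measurableSet_Ioo fun u _ => hk.monotone (min_le_left u t)
  have hlarge : weightedNorm q w (Ioi t) (lowPart t k) ≤ A * B * weightedNorm q w (Ioo 0 t) k :=
    calc weightedNorm q w (Ioi t) (lowPart t k)
        ≤ k t * tailNorm q w t :=
          weightedNorm_le_mul_tailNorm hw fun u _ => hk.monotone (min_le_right u t)
      _ ≤ k t * (A * w t) := mul_le_mul_right (HA ht) _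
      _ = A * (w t * k t) := by ring
      _ ≤ A * (B * weightedNorm q w (Ioo 0 t) k) := mul_le_mul_right (HB ht hk) _
      _ = _ := (mul_assoc _ _ _).symm
  calc weightedNorm q w (Ioi 0) (lowPart t k)
      ≤ LpAddConst q * (weightedNorm q w (Ioo 0 t) k + A * B * weightedNorm q w (Ioo 0 t) k) :=
        (weightedNorm_Ioi_le_add hw (hk.measurable_lowPart t) 0 t).trans (by gcongr)
    _ = _ := by ring

theorem PowerGrowth.exists_weightedNorm_Ioo_highPart_le
    (hv : PowerGrowth β fun u => ENNReal.ofReal u * w u) (hβ : 0 < β)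
    (hw : AEMeasurable w logMeasure) (q : ℝ≥0∞) :
    ∃ C : ℝ≥0∞, C ≠ ∞ ∧ ∀ ⦃s t : ℝ⦄, 0 < s → s ≤ t → ∀ k : ℝ → ℝ≥0∞,
      weightedNorm q w (Ioo 0 s) (highPart t k) ≤
        C * (ENNReal.ofReal t⁻¹ * k t) * (ENNReal.ofReal s * w s) := by
  obtain ⟨A, hA, HA⟩ := hv.exists_eLpNorm_Ioo_le hβ q
  refine ⟨A, hA, fun s t hs hst k => ?_⟩
  have hpt : ∀ u ∈ Ioo 0 s,
      w u * highPart t k u ≤ ENNReal.ofReal t⁻¹ * k t * (ENNReal.ofReal u * w u) := fun u hu => by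
    rw [highPart_of_le (hu.2.le.trans hst), div_eq_mul_inv, ENNReal.ofReal_mul hu.1.le]
    exact le_of_eq (by ring)
  calc weightedNorm q w (Ioo 0 s) (highPart t k)
      ≤ ENNReal.ofReal t⁻¹ * k t *
          eLpNorm (fun u => ENNReal.ofReal u * w u) q (logMeasure.restrict (Ioo 0 s)) :=
        eLpNorm_restrict_le_mul measurableSet_Ioo (by fun_prop) hpt
    _ ≤ ENNReal.ofReal t⁻¹ * k t * (A * (ENNReal.ofReal s * w s)) := mul_le_mul_right (HA hs) _
    _ = _ := by ring

theorem ofReal_inv_mul_mul_ofReal_mul (ht : 0 < t) (x y : ℝ≥0∞) :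
    ENNReal.ofReal t⁻¹ * x * (ENNReal.ofReal t * y) = y * x := by
  rw [mul_mul_mul_comm, ← ENNReal.ofReal_mul (inv_nonneg.2 ht.le), inv_mul_cancel₀ ht.ne',
    ENNReal.ofReal_one, one_mul, mul_comm]

theorem PowerGrowth.exists_weightedNorm_Ioo_weightedNorm_highPart_le
    (hv : PowerGrowth β fun u => ENNReal.ofReal u * w u) (hβ : 0 < β) (hγ : PowerGrowth γ d)
    (hβγ : 0 < β + γ) (hw : AEMeasurable w logMeasure) (hd : AEMeasurable d logMeasure)
    (hr : r ≠ 0) (q : ℝ≥0∞) :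
    ∃ C : ℝ≥0∞, C ≠ ∞ ∧ ∀ ⦃t : ℝ⦄, 0 < t → ∀ k : ℝ → ℝ≥0∞,
      weightedNorm r d (Ioo 0 t) (fun s => weightedNorm q w (Ioo 0 s) (highPart t k)) ≤
        C * (w t * k t * tailNorm r d t) := by
  obtain ⟨A, hA, HA⟩ := hv.exists_weightedNorm_Ioo_highPart_le hβ hw q
  obtain ⟨B, hB, HB⟩ := (hv.mul hγ).exists_eLpNorm_Ioo_le hβγ r
  obtain ⟨D, hD, HD⟩ := hγ.exists_le_tailNorm hd hr
  refine ⟨A * B * D, by finiteness, fun t ht k => ?_⟩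
  set c := ENNReal.ofReal t⁻¹ * k t
  have hpt : ∀ s ∈ Ioo 0 t, d s * weightedNorm q w (Ioo 0 s) (highPart t k) ≤
      A * c * (ENNReal.ofReal s * w s * d s) := fun s hs =>
    (mul_le_mul_right (HA hs.1 hs.2.le k) _).trans_eq (by ring)
  calc weightedNorm r d (Ioo 0 t) (fun s => weightedNorm q w (Ioo 0 s) (highPart t k))
      ≤ A * c * eLpNorm (fun s => ENNReal.ofReal s * w s * d s) r
          (logMeasure.restrict (Ioo 0 t)) :=
        eLpNorm_restrict_le_mul measurableSet_Ioo (by fun_prop) hpt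
    _ ≤ A * c * (B * (ENNReal.ofReal t * w t * (D * tailNorm r d t))) := by
        gcongr
        exact (HB ht).trans (mul_le_mul_right (mul_le_mul_right (HD ht) _) _)
    _ = A * B * D * (c * (ENNReal.ofReal t * w t) * tailNorm r d t) := by ring
    _ = A * B * D * (w t * k t * tailNorm r d t) := by rw [ofReal_inv_mul_mul_ofReal_mul ht]

theorem PowerGrowth.exists_weightedNorm_Ioi_weightedNorm_highPart_le
    (hv : PowerGrowth β fun u => ENNReal.ofReal u * w u) (hβ : 0 < β)
    (hw : AEMeasurable w logMeasure) (hd : AEMeasurable d logMeasure) (r q : ℝ≥0∞) :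
    ∃ C : ℝ≥0∞, C ≠ ∞ ∧ ∀ ⦃t : ℝ⦄, 0 < t → ∀ ⦃k⦄, QuasiConcave k →
      weightedNorm r d (Ioi t) (fun s => weightedNorm q w (Ioo 0 s) (highPart t k)) ≤
        C * (w t * k t * tailNorm r d t + nestedNorm r q d w t k) := by
  obtain ⟨A, hA, HA⟩ := hv.exists_weightedNorm_Ioo_highPart_le hβ hw q
  have hq' := (LpAddConst_lt_top q).ne
  have hr' := (LpAddConst_lt_top r).ne
  refine ⟨LpAddConst q * LpAddConst r * (A + 1), by finiteness, fun t ht k hk => ?_⟩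
  have hkm := measurable_weightedNorm_Ioo q w k t
  have hinner : ∀ s ∈ Ioi t, weightedNorm q w (Ioo 0 s) (highPart t k) ≤
      LpAddConst q * (A * (w t * k t) + weightedNorm q w (Ioo t s) k) := fun s _ => by
    refine (weightedNorm_Ioo_le_add hw (hk.measurable_highPart t) 0 t s).trans ?_
    gcongr
    · exact (HA ht le_rfl k).trans_eq <| by
        rw [mul_assoc, ofReal_inv_mul_mul_ofReal_mul ht]
    · exact weightedNorm_mono measurableSet_Ioo fun u hu => (highPart_of_ge ht hu.1.le).le
  calc weightedNorm r d (Ioi t) (fun s => weightedNorm q w (Ioo 0 s) (highPart t k))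
      ≤ LpAddConst q * weightedNorm r d (Ioi t)
          (fun s => A * (w t * k t) + weightedNorm q w (Ioo t s) k) :=
        weightedNorm_le_mul hd (by fun_prop) measurableSet_Ioi hinner
    _ ≤ LpAddConst q * (LpAddConst r *
          (A * (w t * k t) * tailNorm r d t + nestedNorm r q d w t k)) := by
        gcongr
        refine (weightedNorm_add_le hd measurable_const hkm).trans ?_
        gcongr
        · exact weightedNorm_le_mul_tailNorm hd fun _ _ => le_rfl
        · exact le_rfl
    _ ≤ LpAddConst q * (LpAddConst r *
          ((A + 1) * (w t * k t) * tailNorm r d t + (A + 1) * nestedNorm r q d w t k)) := by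
        gcongr
        · exact le_self_add
        · exact le_mul_of_one_le_left' le_add_self
    _ = _ := by ring

theorem PowerGrowth.exists_nestedNorm_highPart_le
    (hv : PowerGrowth β fun u => ENNReal.ofReal u * w u) (hβ : 0 < β) (hγ : PowerGrowth γ d)
    (hβγ : 0 < β + γ) (hw : AEMeasurable w logMeasure) (hd : AEMeasurable d logMeasure)
    (hr : r ≠ 0) (q : ℝ≥0∞) :
    ∃ C : ℝ≥0∞, C ≠ ∞ ∧ ∀ ⦃t : ℝ⦄, 0 < t → ∀ ⦃k⦄, QuasiConcave k →
      nestedNorm r q d w 0 (highPart t k) ≤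
        C * (w t * k t * tailNorm r d t + nestedNorm r q d w t k) := by
  obtain ⟨A, hA, HA⟩ := hv.exists_weightedNorm_Ioo_weightedNorm_highPart_le hβ hγ hβγ hw hd hr q
  obtain ⟨B, hB, HB⟩ := hv.exists_weightedNorm_Ioi_weightedNorm_highPart_le hβ hw hd r q
  have hr' := (LpAddConst_lt_top r).ne
  refine ⟨LpAddConst r * (A + B), by finiteness, fun t ht k hk => ?_⟩
  calc nestedNorm r q d w 0 (highPart t k)
      ≤ LpAddConst r * (A * (w t * k t * tailNorm r d t) +
          B * (w t * k t * tailNorm r d t + nestedNorm r q d w t k)) :=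
        (weightedNorm_Ioi_le_add hd (measurable_weightedNorm_Ioo q w _ 0) 0 t).trans
          (mul_le_mul_right (add_le_add (HA ht k) (HB ht hk)) _)
    _ ≤ LpAddConst r * (A * (w t * k t * tailNorm r d t + nestedNorm r q d w t k) +
          B * (w t * k t * tailNorm r d t + nestedNorm r q d w t k)) := by
        gcongr
        exact le_self_add
    _ = _ := by ring

end Decompositions

/-! ### The right-hand side of Holmstedt's formula -/

/-- The hypotheses on the weights under which Holmstedt's formula holds; for slowly varying `b₀`,
`b₁`, `a₁` they are satisfied by `w₀ = u ^ (-θ₀) b₀`, `w₁ = u ^ (-θ₁) a₁` and `d = b₁ / a₁`. -/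
structure IsHolmstedtTriple (r : ℝ≥0∞) (w₀ w₁ d : ℝ → ℝ≥0∞) : Prop where
  weight₀ : IsWeight w₀
  weight₁ : IsWeight w₁
  weight : IsWeight d
  tailNorm_ne_top : tailNorm r d 1 ≠ ∞
  decay₀ : ∃ α > 0, PowerDecay α w₀
  decay₁ : ∃ α, PowerDecay α w₁
  growth_div : ∃ ε > 0, PowerGrowth ε fun u => w₀ u / w₁ u
  growth : ∃ β > 0, ∃ γ, 0 < β + γ ∧ (PowerGrowth β fun u => ENNReal.ofReal u * w₁ u) ∧
    PowerGrowth γ d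

/-- The right-hand side of Holmstedt's formula. -/
def holmstedtNorm (r₀ r q : ℝ≥0∞) (w₀ w₁ d : ℝ → ℝ≥0∞) (t : ℝ) (k : ℝ → ℝ≥0∞) : ℝ≥0∞ :=
  weightedNorm r₀ w₀ (Ioo 0 t) k + holmstedtRho r w₀ w₁ d t * nestedNorm r q d w₁ t k

namespace IsHolmstedtTriple

variable {w₀ w₁ d : ℝ → ℝ≥0∞} {q r r₀ : ℝ≥0∞}

theorem weight_tailNorm (h : IsHolmstedtTriple r w₀ w₁ d) (hr : r ≠ 0) :
    IsWeight (tailNorm r d) :=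
  let ⟨_, _, _, _, _, hγ⟩ := h.growth
  h.weight.tailNorm hγ hr h.tailNorm_ne_top

theorem holmstedtRho_mul_mul (h : IsHolmstedtTriple r w₀ w₁ d) (hr : r ≠ 0) {t : ℝ} (ht : 0 < t)
    (x : ℝ≥0∞) : holmstedtRho r w₀ w₁ d t * (w₁ t * x * tailNorm r d t) = w₀ t * x := by
  have hR := h.weight_tailNorm hr
  rw [mul_right_comm, ← mul_assoc, holmstedtRho_mul (h.weight₁.ne_zero ht) (h.weight₁.ne_top ht)
    (hR.ne_zero ht) (hR.ne_top ht)]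

theorem exists_holmstedtNorm_le_weightedNorm (h : IsHolmstedtTriple r w₀ w₁ d) (hr₀ : r₀ ≠ 0)
    (hr : r ≠ 0) (q : ℝ≥0∞) :
    ∃ C : ℝ≥0∞, C ≠ ∞ ∧ ∀ ⦃t : ℝ⦄, 0 < t → ∀ ⦃k⦄, QuasiConcave k →
      holmstedtNorm r₀ r q w₀ w₁ d t k ≤ C * weightedNorm r₀ w₀ (Ioi 0) k := by
  obtain ⟨α, -, h₀⟩ := h.decay₀
  obtain ⟨ε, hε, hw⟩ := h.growth_div
  obtain ⟨C, hC, H⟩ := exists_holmstedtRho_mul_nestedNorm_le h.weight₀ h.weight₁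
    h.weight.aemeasurable (h.weight_tailNorm hr) hr₀ h₀ hε hw q
  refine ⟨1 + C, by finiteness, fun t ht k hk => ?_⟩
  rw [one_add_mul]
  exact add_le_add (weightedNorm_mono_set Ioo_subset_Ioi_self) (H ht hk)

theorem exists_holmstedtNorm_le_nestedNorm (h : IsHolmstedtTriple r w₀ w₁ d) (hq : q ≠ 0)
    (hr : r ≠ 0) (r₀ : ℝ≥0∞) :
    ∃ C : ℝ≥0∞, C ≠ ∞ ∧ ∀ ⦃t : ℝ⦄, 0 < t → ∀ ⦃k⦄, QuasiConcave k →
      holmstedtNorm r₀ r q w₀ w₁ d t k ≤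
        C * (holmstedtRho r w₀ w₁ d t * nestedNorm r q d w₁ 0 k) := by
  obtain ⟨α, h₁⟩ := h.decay₁
  obtain ⟨ε, hε, hw⟩ := h.growth_div
  obtain ⟨C, hC, H⟩ := exists_weightedNorm_Ioo_le_holmstedtRho_mul h.weight₀ h.weight₁
    h.weight.aemeasurable (h.weight_tailNorm hr) hq h₁ hε hw r₀
  refine ⟨C + 1, by finiteness, fun t ht k hk => ?_⟩
  rw [add_one_mul]
  exact add_le_add (H ht hk) (mul_le_mul_right (nestedNorm_le_nestedNorm_zero ht.le k) _)

theorem holmstedtNorm_add_le (h : IsHolmstedtTriple r w₀ w₁ d) (r₀ q : ℝ≥0∞) {k l : ℝ → ℝ≥0∞}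
    (hk : Measurable k) (hl : Measurable l) (t : ℝ) :
    holmstedtNorm r₀ r q w₀ w₁ d t (fun u => k u + l u) ≤
      (LpAddConst r₀ + LpAddConst q * LpAddConst r) *
        (holmstedtNorm r₀ r q w₀ w₁ d t k + holmstedtNorm r₀ r q w₀ w₁ d t l) := by
  have h₀ := weightedNorm_add_le (q := r₀) (s := Ioo 0 t) h.weight₀.aemeasurable hk hl
  have h₁ := nestedNorm_add_le (r := r) (q := q) h.weight.aemeasurable h.weight₁.aemeasurable
    hk hl t
  set ρ := holmstedtRho r w₀ w₁ d t
  set A := LpAddConst r₀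
  set B := LpAddConst q * LpAddConst r
  set X := weightedNorm r₀ w₀ (Ioo 0 t)
  set Y := nestedNorm r q d w₁ t
  calc X (fun u => k u + l u) + ρ * Y (fun u => k u + l u)
      ≤ A * (X k + X l) + ρ * (B * (Y k + Y l)) := by gcongr
    _ ≤ (A + B) * (X k + X l) + ρ * ((A + B) * (Y k + Y l)) := by
        gcongr
        exacts [le_self_add, le_add_self]
    _ = (A + B) * ((X k + ρ * Y k) + (X l + ρ * Y l)) := by ring

theorem holmstedtNorm_le_mul (h : IsHolmstedtTriple r w₀ w₁ d) (r₀ q : ℝ≥0∞) {k l : ℝ → ℝ≥0∞}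
    (hl : Measurable l) {c : ℝ≥0∞} {t : ℝ} (ht : 0 ≤ t) (hkl : ∀ u ∈ Ioi 0, k u ≤ c * l u) :
    holmstedtNorm r₀ r q w₀ w₁ d t k ≤ c * holmstedtNorm r₀ r q w₀ w₁ d t l := by
  have h₀ : weightedNorm r₀ w₀ (Ioo 0 t) k ≤ c * weightedNorm r₀ w₀ (Ioo 0 t) l :=
    weightedNorm_le_mul h.weight₀.aemeasurable hl measurableSet_Ioo fun u hu => hkl u hu.1
  have h₁ : nestedNorm r q d w₁ t k ≤ c * nestedNorm r q d w₁ t l :=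
    nestedNorm_le_mul h.weight.aemeasurable h.weight₁.aemeasurable hl fun u hu =>
      hkl u (ht.trans_lt hu)
  refine (add_le_add h₀ (mul_le_mul_right h₁ _)).trans_eq ?_
  rw [holmstedtNorm]
  ring

theorem exists_holmstedtNorm_add_le (h : IsHolmstedtTriple r w₀ w₁ d) (hq : q ≠ 0) (hr₀ : r₀ ≠ 0)
    (hr : r ≠ 0) :
    ∃ C : ℝ≥0∞, C ≠ ∞ ∧ ∀ ⦃t : ℝ⦄, 0 < t → ∀ ⦃k l⦄, QuasiConcave k → QuasiConcave l →
      holmstedtNorm r₀ r q w₀ w₁ d t (fun u => k u + l u) ≤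
        C * (weightedNorm r₀ w₀ (Ioi 0) k +
          holmstedtRho r w₀ w₁ d t * nestedNorm r q d w₁ 0 l) := by
  obtain ⟨A, hA, HA⟩ := h.exists_holmstedtNorm_le_weightedNorm hr₀ hr q
  obtain ⟨B, hB, HB⟩ := h.exists_holmstedtNorm_le_nestedNorm hq hr r₀
  have hr₀' := (LpAddConst_lt_top r₀).ne
  have hq' := (LpAddConst_lt_top q).ne
  have hr' := (LpAddConst_lt_top r).ne
  refine ⟨(LpAddConst r₀ + LpAddConst q * LpAddConst r) * (A + B), by finiteness,
    fun t ht k l hk hl => ?_⟩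
  refine (h.holmstedtNorm_add_le r₀ q hk.monotone.measurable hl.monotone.measurable t).trans ?_
  rw [mul_assoc]
  refine mul_le_mul_right ((add_le_add (HA ht hk) (HB ht hl)).trans ?_) _
  rw [mul_add (A + B)]
  gcongr
  exacts [le_self_add, le_add_self]

theorem exists_weightedNorm_lowPart_add_nestedNorm_highPart_le (h : IsHolmstedtTriple r w₀ w₁ d)
    (hr₀ : r₀ ≠ 0) (hr : r ≠ 0) (q : ℝ≥0∞) :
    ∃ C : ℝ≥0∞, C ≠ ∞ ∧ ∀ ⦃t : ℝ⦄, 0 < t → ∀ ⦃k⦄, QuasiConcave k →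
      weightedNorm r₀ w₀ (Ioi 0) (lowPart t k) +
          holmstedtRho r w₀ w₁ d t * nestedNorm r q d w₁ 0 (highPart t k) ≤
        C * holmstedtNorm r₀ r q w₀ w₁ d t k := by
  obtain ⟨α, hα, h₀⟩ := h.decay₀
  obtain ⟨β, hβ, γ, hβγ, hv, hγ⟩ := h.growth
  obtain ⟨A, hA, HA⟩ := h₀.exists_weightedNorm_lowPart_le hα h.weight₀.aemeasurable hr₀
  obtain ⟨B, hB, HB⟩ := hv.exists_nestedNorm_highPart_le hβ hγ hβγ h.weight₁.aemeasurable
    h.weight.aemeasurable hr q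
  obtain ⟨D, hD, HD⟩ := h₀.exists_mul_le_weightedNorm h.weight₀.aemeasurable hr₀
  refine ⟨A + B * (D + 1), by finiteness, fun t ht k hk => ?_⟩
  set ρ := holmstedtRho r w₀ w₁ d t
  set X := weightedNorm r₀ w₀ (Ioo 0 t) k
  set Y := nestedNorm r q d w₁ t k
  have hhigh : ρ * nestedNorm r q d w₁ 0 (highPart t k) ≤ B * (D * X + ρ * Y) :=
    calc ρ * nestedNorm r q d w₁ 0 (highPart t k)
        ≤ ρ * (B * (w₁ t * k t * tailNorm r d t + Y)) := mul_le_mul_right (HB ht hk) _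
      _ = B * (ρ * (w₁ t * k t * tailNorm r d t) + ρ * Y) := by ring
      _ ≤ B * (D * X + ρ * Y) := by
          rw [h.holmstedtRho_mul_mul hr ht]
          exact mul_le_mul_right (add_le_add (HD ht hk) le_rfl) _
  calc weightedNorm r₀ w₀ (Ioi 0) (lowPart t k) + ρ * nestedNorm r q d w₁ 0 (highPart t k)
      ≤ A * X + B * (D * X + ρ * Y) := add_le_add (HA ht hk) hhigh
    _ ≤ A * (X + ρ * Y) + B * (D * (X + ρ * Y) + (X + ρ * Y)) := by
        gcongr
        exacts [le_self_add, le_self_add, le_add_self]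
    _ = (A + B * (D + 1)) * (X + ρ * Y) := by ring

end IsHolmstedtTriple

/-! ### The K-functional -/

/-- An extended-real-valued quasi-seminorm on an additive group: the quasi-triangle inequality
without completeness, definiteness or homogeneity. -/
structure IsAddGroupQuasiSeminorm {G : Type*} [AddCommGroup G] (N : G → ℝ≥0∞) : Prop where
  map_zero : N 0 = 0
  map_neg : ∀ x, N (-x) = N x
  exists_add_le : ∃ C : ℝ≥0∞, C ≠ ∞ ∧ ∀ x y, N (x + y) ≤ C * (N x + N y)

theorem QuasiBanach.isAddGroupQuasiSeminorm (A : QuasiBanach E) : IsAddGroupQuasiSeminorm A.N where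
  map_zero := A.zero
  map_neg x := by simpa using A.smul (-1) x
  exists_add_le := let ⟨C, _, hC, H⟩ := A.quasi; ⟨C, hC, H⟩

section Kf

variable {G : Type*} [AddCommGroup G] {N₀ N₁ : G → ℝ≥0∞}

theorem Kf_le_add (u : ℝ) (f g : G) : Kf N₀ N₁ u f ≤ N₀ g + ENNReal.ofReal u * N₁ (f - g) :=
  iInf_le _ g

theorem quasiConcave_Kf (N₀ N₁ : G → ℝ≥0∞) (f : G) : QuasiConcave fun u => Kf N₀ N₁ u f where
  monotone _ _ h := iInf_mono fun _ => by gcongr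
  le_div_mul u t hu hut := by
    have hone : 1 ≤ ENNReal.ofReal (t / u) := ENNReal.one_le_ofReal.2 ((one_le_div hu).2 hut)
    have hmul : ENNReal.ofReal t = ENNReal.ofReal (t / u) * ENNReal.ofReal u := by
      rw [← ENNReal.ofReal_mul (div_nonneg (hu.le.trans hut) hu.le), div_mul_cancel₀ _ hu.ne']
    unfold Kf
    rw [ENNReal.mul_iInf_of_ne (one_pos.trans_le hone).ne' ENNReal.ofReal_ne_top]
    refine iInf_mono fun g => ?_
    rw [mul_add, ← mul_assoc, ← hmul]
    gcongr
    exact le_mul_of_one_le_left' hone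

theorem Kf_le_left (h₁ : N₁ 0 = 0) (u : ℝ) (f : G) : Kf N₀ N₁ u f ≤ N₀ f := by
  simpa only [sub_self, h₁, mul_zero, add_zero] using Kf_le_add (N₀ := N₀) (N₁ := N₁) u f f

theorem Kf_le_mul_right (h₀ : N₀ 0 = 0) (u : ℝ) (f : G) :
    Kf N₀ N₁ u f ≤ ENNReal.ofReal u * N₁ f := by
  simpa only [sub_zero, h₀, zero_add] using Kf_le_add (N₀ := N₀) (N₁ := N₁) u f 0

namespace IsAddGroupQuasiSeminorm

theorem Kf_zero (h₀ : IsAddGroupQuasiSeminorm N₀) (h₁ : IsAddGroupQuasiSeminorm N₁) (u : ℝ) :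
    Kf N₀ N₁ u 0 = 0 :=
  nonpos_iff_eq_zero.1 ((Kf_le_left h₁.map_zero u 0).trans h₀.map_zero.le)

theorem Kf_neg (h₀ : IsAddGroupQuasiSeminorm N₀) (h₁ : IsAddGroupQuasiSeminorm N₁) (u : ℝ) (f : G) :
    Kf N₀ N₁ u (-f) = Kf N₀ N₁ u f :=
  (Equiv.neg G).iInf_congr fun g => by
    rw [Equiv.neg_apply, h₀.map_neg, ← h₁.map_neg (f - -g)]
    congr 3
    abel

theorem exists_Kf_add_le (h₀ : IsAddGroupQuasiSeminorm N₀) (h₁ : IsAddGroupQuasiSeminorm N₁) :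
    ∃ C : ℝ≥0∞, C ≠ ∞ ∧ ∀ (u : ℝ) (f g : G),
      Kf N₀ N₁ u (f + g) ≤ C * (Kf N₀ N₁ u f + Kf N₀ N₁ u g) := by
  obtain ⟨A, hA, HA⟩ := h₀.exists_add_le
  obtain ⟨B, hB, HB⟩ := h₁.exists_add_le
  have hC : 1 + A + B ≠ 0 := by simp
  refine ⟨1 + A + B, by finiteness, fun u f g => ?_⟩
  rw [Kf, Kf, Kf, ENNReal.iInf_add, ENNReal.mul_iInf_of_ne hC (by finiteness)]
  refine le_iInf fun x => ?_
  rw [ENNReal.add_iInf, ENNReal.mul_iInf_of_ne hC (by finiteness)]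
  refine le_iInf fun y => ?_
  calc ⨅ z, N₀ z + ENNReal.ofReal u * N₁ (f + g - z)
      ≤ N₀ (x + y) + ENNReal.ofReal u * N₁ ((f - x) + (g - y)) :=
        iInf_le_of_le (x + y) (by rw [add_sub_add_comm])
    _ ≤ A * (N₀ x + N₀ y) + ENNReal.ofReal u * (B * (N₁ (f - x) + N₁ (g - y))) := by
        gcongr
        exacts [HA x y, HB _ _]
    _ ≤ (1 + A + B) * (N₀ x + N₀ y) +
          ENNReal.ofReal u * ((1 + A + B) * (N₁ (f - x) + N₁ (g - y))) := by
        gcongr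
        exacts [le_add_self.trans le_self_add, le_add_self]
    _ = _ := by ring

theorem exists_Kf_sub_le (h₀ : IsAddGroupQuasiSeminorm N₀) (h₁ : IsAddGroupQuasiSeminorm N₁) :
    ∃ C : ℝ≥0∞, C ≠ ∞ ∧ ∀ (u : ℝ) (f g : G),
      Kf N₀ N₁ u (f - g) ≤ C * (Kf N₀ N₁ u f + Kf N₀ N₁ u g) := by
  obtain ⟨C, hC, H⟩ := h₀.exists_Kf_add_le h₁
  exact ⟨C, hC, fun u f g => by
    rw [sub_eq_add_neg, ← h₀.Kf_neg h₁ u g]; exact H u f (-g)⟩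

theorem exists_Kf_le_two_mul (h₀ : IsAddGroupQuasiSeminorm N₀) (h₁ : IsAddGroupQuasiSeminorm N₁)
    {t : ℝ} (ht : 0 < t) (f : G) :
    ∃ g, ∀ ⦃u : ℝ⦄, 0 < u → Kf N₀ N₁ u g ≤ 2 * Kf N₀ N₁ t f ∧
      Kf N₀ N₁ u (f - g) ≤ 2 * (ENNReal.ofReal (u / t) * Kf N₀ N₁ t f) := by
  have hK := quasiConcave_Kf N₀ N₁ f
  have hself : ∀ {u : ℝ} {x : ℝ≥0∞}, Kf N₀ N₁ u (f - f) ≤ x := fun {u x} => by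
    rw [sub_self, h₀.Kf_zero h₁]
    exact zero_le
  rcases eq_or_ne (Kf N₀ N₁ t f) 0 with hzero | hzero
  · refine ⟨f, fun u _ => ⟨?_, hself⟩⟩
    rcases le_total u t with h | h
    · exact (hK.monotone h).trans (by simp [hzero])
    · exact (hK.le_div_mul ht h).trans (by simp [hzero])
  rcases eq_or_ne (Kf N₀ N₁ t f) ∞ with htop | htop
  · exact ⟨f, fun u _ => ⟨by simp [htop], hself⟩⟩
  obtain ⟨g, hg⟩ : ∃ g, N₀ g + ENNReal.ofReal t * N₁ (f - g) < 2 * Kf N₀ N₁ t f :=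
    iInf_lt_iff.1 ((ENNReal.lt_add_right htop hzero).trans_eq (two_mul _).symm)
  refine ⟨g, fun u hu => ⟨?_, ?_⟩⟩
  · exact (Kf_le_left h₁.map_zero u g).trans (le_self_add.trans hg.le)
  · have hu' : ENNReal.ofReal u = ENNReal.ofReal (u / t) * ENNReal.ofReal t := by
      rw [← ENNReal.ofReal_mul (by positivity), div_mul_cancel₀ _ ht.ne']
    calc Kf N₀ N₁ u (f - g) ≤ ENNReal.ofReal u * N₁ (f - g) := Kf_le_mul_right h₀.map_zero u _
      _ = ENNReal.ofReal (u / t) * (ENNReal.ofReal t * N₁ (f - g)) := by rw [hu', mul_assoc]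
      _ ≤ ENNReal.ofReal (u / t) * (2 * Kf N₀ N₁ t f) := by
          gcongr ENNReal.ofReal (u / t) * ?_
          exact le_add_self.trans hg.le
      _ = _ := by ring

theorem exists_Kf_le_lowPart_and_highPart (h₀ : IsAddGroupQuasiSeminorm N₀)
    (h₁ : IsAddGroupQuasiSeminorm N₁) :
    ∃ C : ℝ≥0∞, C ≠ ∞ ∧ ∀ ⦃t : ℝ⦄, 0 < t → ∀ f : G, ∃ g : G, ∀ ⦃u : ℝ⦄, 0 < u →
      Kf N₀ N₁ u g ≤ C * lowPart t (fun v => Kf N₀ N₁ v f) u ∧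
      Kf N₀ N₁ u (f - g) ≤ C * highPart t (fun v => Kf N₀ N₁ v f) u := by
  obtain ⟨C, hC, H⟩ := h₀.exists_Kf_sub_le h₁
  refine ⟨2 + C * 3, by finiteness, fun t ht f => ?_⟩
  obtain ⟨g, hg⟩ := h₀.exists_Kf_le_two_mul h₁ ht f
  have hK := quasiConcave_Kf N₀ N₁ f
  refine ⟨g, fun u hu => ?_⟩
  have hle : ∀ {x y : ℝ≥0∞}, x ≤ C * (y + 2 * y) → x ≤ (2 + C * 3) * y := fun {x y} h =>
    calc x ≤ C * (y + 2 * y) := h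
      _ = C * 3 * y := by ring
      _ ≤ (2 + C * 3) * y := mul_le_mul_left le_add_self _
  rcases le_total u t with hut | htu
  · have hfg : Kf N₀ N₁ u (f - g) ≤ 2 * Kf N₀ N₁ u f :=
      (hg hu).2.trans (mul_le_mul_right (hK.div_mul_le hu hut) _)
    rw [lowPart, min_eq_left hut, highPart_of_le hut]
    refine ⟨hle ?_, (hg hu).2.trans (mul_le_mul_left le_self_add _)⟩
    simpa only [sub_sub_self] using
      (H u f (f - g)).trans (mul_le_mul_right (add_le_add le_rfl hfg) _)
  · have hgu : Kf N₀ N₁ u g ≤ 2 * Kf N₀ N₁ u f :=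
      (hg hu).1.trans (mul_le_mul_right (hK.monotone htu) _)
    rw [lowPart, min_eq_right htu, highPart_of_ge ht htu]
    exact ⟨(hg hu).1.trans (mul_le_mul_left le_self_add _),
      hle ((H u f g).trans (mul_le_mul_right (add_le_add le_rfl hgu) _))⟩

end IsAddGroupQuasiSeminorm

end Kf

/-! ### Holmstedt's formula -/

namespace IsHolmstedtTriple

variable {G : Type*} [AddCommGroup G] {N₀ N₁ : G → ℝ≥0∞} {r₀ r q : ℝ≥0∞} {w₀ w₁ d : ℝ → ℝ≥0∞}

theorem exists_holmstedtNorm_le_Kf (h : IsHolmstedtTriple r w₀ w₁ d)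
    (h₀ : IsAddGroupQuasiSeminorm N₀) (h₁ : IsAddGroupQuasiSeminorm N₁) (hr₀ : r₀ ≠ 0) (hr : r ≠ 0)
    (hq : q ≠ 0) :
    ∃ C : ℝ≥0∞, C ≠ ∞ ∧ ∀ (f : G) ⦃t ρ : ℝ⦄, 0 < t →
      ENNReal.ofReal ρ = holmstedtRho r w₀ w₁ d t →
      holmstedtNorm r₀ r q w₀ w₁ d t (fun u => Kf N₀ N₁ u f) ≤
        C * Kf (fun g => weightedNorm r₀ w₀ (Ioi 0) fun u => Kf N₀ N₁ u g)
          (fun g => nestedNorm r q d w₁ 0 fun u => Kf N₀ N₁ u g) ρ f := by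
  obtain ⟨A, hA, HA⟩ := h₀.exists_Kf_add_le h₁
  obtain ⟨B, hB, HB⟩ := h.exists_holmstedtNorm_add_le hq hr₀ hr
  have hC : A * B + 1 ≠ 0 := by simp
  refine ⟨A * B + 1, by finiteness, fun f t ρ ht hρ => ?_⟩
  rw [Kf, ENNReal.mul_iInf_of_ne hC (by finiteness)]
  refine le_iInf fun g => ?_
  have hg := quasiConcave_Kf N₀ N₁ g
  have hfg := quasiConcave_Kf N₀ N₁ (f - g)
  have hf : ∀ u ∈ Ioi (0 : ℝ), Kf N₀ N₁ u f ≤ A * (Kf N₀ N₁ u g + Kf N₀ N₁ u (f - g)) :=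
    fun u _ => by simpa only [add_sub_cancel] using HA u g (f - g)
  calc holmstedtNorm r₀ r q w₀ w₁ d t (fun u => Kf N₀ N₁ u f)
      ≤ A * holmstedtNorm r₀ r q w₀ w₁ d t (fun u => Kf N₀ N₁ u g + Kf N₀ N₁ u (f - g)) :=
        h.holmstedtNorm_le_mul r₀ q (hg.monotone.measurable.add hfg.monotone.measurable) ht.le hf
    _ ≤ A * (B * _) := mul_le_mul_right (HB ht hg hfg) _
    _ ≤ _ := by
        rw [← mul_assoc, hρ]
        exact mul_le_mul_left le_self_add _

theorem exists_Kf_le_holmstedtNorm (h : IsHolmstedtTriple r w₀ w₁ d)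
    (h₀ : IsAddGroupQuasiSeminorm N₀) (h₁ : IsAddGroupQuasiSeminorm N₁) (hr₀ : r₀ ≠ 0) (hr : r ≠ 0)
    (q : ℝ≥0∞) :
    ∃ C : ℝ≥0∞, C ≠ ∞ ∧ ∀ (f : G) ⦃t ρ : ℝ⦄, 0 < t →
      ENNReal.ofReal ρ = holmstedtRho r w₀ w₁ d t →
      Kf (fun g => weightedNorm r₀ w₀ (Ioi 0) fun u => Kf N₀ N₁ u g)
          (fun g => nestedNorm r q d w₁ 0 fun u => Kf N₀ N₁ u g) ρ f ≤
        C * holmstedtNorm r₀ r q w₀ w₁ d t (fun u => Kf N₀ N₁ u f) := by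
  obtain ⟨A, hA, HA⟩ := h₀.exists_Kf_le_lowPart_and_highPart h₁
  obtain ⟨B, hB, HB⟩ := h.exists_weightedNorm_lowPart_add_nestedNorm_highPart_le hr₀ hr q
  refine ⟨A * B, by finiteness, fun f t ρ ht hρ => ?_⟩
  obtain ⟨g, hg⟩ := HA ht f
  set k := fun u => Kf N₀ N₁ u f
  have hk : QuasiConcave k := quasiConcave_Kf N₀ N₁ f
  have hlow : weightedNorm r₀ w₀ (Ioi 0) (fun u => Kf N₀ N₁ u g) ≤
      A * weightedNorm r₀ w₀ (Ioi 0) (lowPart t k) :=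
    weightedNorm_le_mul h.weight₀.aemeasurable (hk.measurable_lowPart t) measurableSet_Ioi
      fun u hu => (hg hu).1
  have hhigh : nestedNorm r q d w₁ 0 (fun u => Kf N₀ N₁ u (f - g)) ≤
      A * nestedNorm r q d w₁ 0 (highPart t k) :=
    nestedNorm_le_mul h.weight.aemeasurable h.weight₁.aemeasurable (hk.measurable_highPart t)
      fun u hu => (hg hu).2
  calc _ ≤ weightedNorm r₀ w₀ (Ioi 0) (fun u => Kf N₀ N₁ u g) +
          ENNReal.ofReal ρ * nestedNorm r q d w₁ 0 (fun u => Kf N₀ N₁ u (f - g)) :=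
        Kf_le_add ρ f g
    _ ≤ A * weightedNorm r₀ w₀ (Ioi 0) (lowPart t k) +
          holmstedtRho r w₀ w₁ d t * (A * nestedNorm r q d w₁ 0 (highPart t k)) := by
        rw [hρ]
        exact add_le_add hlow (mul_le_mul_right hhigh _)
    _ = A * (weightedNorm r₀ w₀ (Ioi 0) (lowPart t k) +
          holmstedtRho r w₀ w₁ d t * nestedNorm r q d w₁ 0 (highPart t k)) := by ring
    _ ≤ A * (B * holmstedtNorm r₀ r q w₀ w₁ d t k) := mul_le_mul_right (HB ht hk) _
    _ = _ := (mul_assoc _ _ _).symm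

theorem exists_Kf_equiv (h : IsHolmstedtTriple r w₀ w₁ d) (h₀ : IsAddGroupQuasiSeminorm N₀)
    (h₁ : IsAddGroupQuasiSeminorm N₁) (hr₀ : r₀ ≠ 0) (hr : r ≠ 0) (hq : q ≠ 0) :
    ∃ C : ℝ≥0∞, 0 < C ∧ C ≠ ∞ ∧ ∀ (f : G) ⦃t ρ : ℝ⦄, 0 < t →
      ENNReal.ofReal ρ = holmstedtRho r w₀ w₁ d t →
      C⁻¹ * holmstedtNorm r₀ r q w₀ w₁ d t (fun u => Kf N₀ N₁ u f) ≤
        Kf (fun g => weightedNorm r₀ w₀ (Ioi 0) fun u => Kf N₀ N₁ u g)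
          (fun g => nestedNorm r q d w₁ 0 fun u => Kf N₀ N₁ u g) ρ f ∧
      Kf (fun g => weightedNorm r₀ w₀ (Ioi 0) fun u => Kf N₀ N₁ u g)
          (fun g => nestedNorm r q d w₁ 0 fun u => Kf N₀ N₁ u g) ρ f ≤
        C * holmstedtNorm r₀ r q w₀ w₁ d t (fun u => Kf N₀ N₁ u f) := by
  obtain ⟨A, hA, HA⟩ := h.exists_holmstedtNorm_le_Kf h₀ h₁ hr₀ hr hq
  obtain ⟨B, hB, HB⟩ := h.exists_Kf_le_holmstedtNorm h₀ h₁ hr₀ hr q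
  have hC : 1 + A + B ≠ 0 := by simp
  refine ⟨1 + A + B, pos_iff_ne_zero.2 hC, by finiteness, fun f t ρ ht hρ => ⟨?_, ?_⟩⟩
  · rw [ENNReal.inv_mul_le_iff hC (by finiteness)]
    exact (HA f ht hρ).trans (mul_le_mul_left (le_add_self.trans le_self_add) _)
  · exact (HB f ht hρ).trans (mul_le_mul_left le_add_self _)

end IsHolmstedtTriple

section SlowlyVarying

variable {θ θ₀ θ₁ : ℝ} {q r : ℝ≥0∞} {a b b₀ : ℝ → ℝ}

theorem ofReal_mul_svWeight {u : ℝ} (hu : 0 < u) (θ : ℝ) (b : ℝ → ℝ) :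
    ENNReal.ofReal u * svWeight θ b u = svWeight (θ - 1) b u := by
  rw [svWeight, svWeight, ← ENNReal.ofReal_mul hu.le, neg_sub, sub_eq_neg_add 1 θ,
    Real.rpow_add_one hu.ne']
  congr 1
  ring

theorem SlowlyVarying.powerGrowth_ofReal_mul (hb : SlowlyVarying b) {α : ℝ} (hα : α < 1 - θ) :
    PowerGrowth α fun u => ENNReal.ofReal u * svWeight θ b u := by
  obtain ⟨C, hC, H⟩ := hb.powerGrowth (θ := θ - 1) (α := α) (by linarith)
  refine ⟨C, hC, fun u t hu hut => ?_⟩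
  simpa only [ofReal_mul_svWeight hu, ofReal_mul_svWeight (hu.trans_le hut)] using H hu hut

/-- The weight `b / a`, written as a quotient of two weights of power type so that the calculus of
`PowerGrowth` and `PowerDecay` applies. -/
def svRatio (b a : ℝ → ℝ) (u : ℝ) : ℝ≥0∞ := svWeight 0 b u / svWeight 0 a u

theorem svRatio_eq_ofReal {u : ℝ} (ha : 0 < a u) : svRatio b a u = ENNReal.ofReal (b u / a u) := by
  simp only [svRatio, svWeight, neg_zero, Real.rpow_zero, one_mul, ENNReal.ofReal_div_of_pos ha]

theorem SlowlyVarying.isHolmstedtTriple (hb₀ : SlowlyVarying b₀) (ha : SlowlyVarying a)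
    (hb : SlowlyVarying b) (hθ₀ : 0 < θ₀) (hθ₀₁ : θ₀ < θ₁) (hθ₁ : θ₁ < 1)
    (hfin : tailNorm r (svRatio b a) 1 ≠ ∞) :
    IsHolmstedtTriple r (svWeight θ₀ b₀) (svWeight θ₁ a) (svRatio b a) where
  weight₀ := hb₀.isWeight θ₀
  weight₁ := ha.isWeight θ₁
  weight := (hb.isWeight 0).div (ha.isWeight 0)
  tailNorm_ne_top := hfin
  decay₀ := ⟨θ₀ / 2, by linarith, hb₀.powerDecay (by linarith)⟩
  decay₁ := ⟨0, ha.powerDecay (by linarith)⟩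
  growth_div := by
    set δ := (θ₁ - θ₀) / 3 with hδ
    exact ⟨-(θ₀ + δ) + (θ₁ - δ), by linarith,
      (hb₀.powerGrowth (by linarith)).div (ha.powerDecay (by linarith))⟩
  growth := by
    set δ := (1 - θ₁) / 4 with hδ
    exact ⟨3 * δ, by linarith, -δ + -δ, by linarith, ha.powerGrowth_ofReal_mul (by linarith),
      (hb.powerGrowth (by linarith)).div (ha.powerDecay (by linarith))⟩

theorem LqNorm_congr {s : Set ℝ} (hs : MeasurableSet s) {f g : ℝ → ℝ≥0∞}
    (h : ∀ u ∈ s, f u = g u) : LqNorm q s f = LqNorm q s g := by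
  have hfg : f =ᵐ[volume.restrict s] g := ae_restrict_of_forall_mem hs h
  have hint := lintegral_congr_ae (hfg.fun_comp (· ^ q.toReal))
  simp only [Function.comp_apply] at hint
  rw [LqNorm, LqNorm, essSup_congr_ae hfg, hint]

theorem LqNorm_eq_weightedNorm (hq : q ≠ 0) {s : Set ℝ} (hs : MeasurableSet s) (hs0 : s ⊆ Ioi 0)
    (θ : ℝ) (b : ℝ → ℝ) (k : ℝ → ℝ≥0∞) :
    LqNorm q s (fun u => ENNReal.ofReal (u ^ (-θ - q⁻¹.toReal) * b u) * k u) =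
      weightedNorm q (svWeight θ b) s k := by
  rw [weightedNorm, ← LqNorm_rpow_mul_eq_eLpNorm hq hs hs0]
  refine LqNorm_congr hs fun u hu => ?_
  have hu0 : 0 < u := hs0 hu
  rw [svWeight, ← mul_assoc, ← ENNReal.ofReal_mul (by positivity), ← mul_assoc,
    ← Real.rpow_add hu0, neg_add_eq_sub, neg_sub_comm]

theorem LqNorm_svWgt_div_eq_tailNorm (hr : r ≠ 0) (ha : ∀ u ∈ Ioi (0 : ℝ), 0 < a u) {t : ℝ}
    (ht : 0 ≤ t) : LqNorm r (Ioi t) (svWgt r fun s => b s / a s) =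
      tailNorm r (svRatio b a) t := by
  have ht0 : Ioi t ⊆ Ioi 0 := Ioi_subset_Ioi ht
  rw [tailNorm, ← LqNorm_rpow_mul_eq_eLpNorm hr measurableSet_Ioi ht0]
  refine LqNorm_congr measurableSet_Ioi fun s hs => ?_
  rw [svWgt, svRatio_eq_ofReal (ha s (ht0 hs)),
    ENNReal.ofReal_mul (Real.rpow_nonneg (le_of_lt (ht0 hs)) _)]

theorem LqNorm_LqNorm_eq_nestedNorm (hr : r ≠ 0) (hq : q ≠ 0) (ha : ∀ u ∈ Ioi (0 : ℝ), 0 < a u)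
    {c : ℝ} (hc : 0 ≤ c) (θ : ℝ) (b : ℝ → ℝ) (k : ℝ → ℝ≥0∞) :
    LqNorm r (Ioi c) (fun s => ENNReal.ofReal (s ^ (-(r⁻¹.toReal)) * (b s / a s)) *
      LqNorm q (Ioo c s) fun u => ENNReal.ofReal (u ^ (-θ - q⁻¹.toReal) * a u) * k u) =
      nestedNorm r q (svRatio b a) (svWeight θ a) c k := by
  have hc0 : Ioi c ⊆ Ioi 0 := Ioi_subset_Ioi hc
  rw [nestedNorm, weightedNorm, ← LqNorm_rpow_mul_eq_eLpNorm hr measurableSet_Ioi hc0]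
  refine LqNorm_congr measurableSet_Ioi fun s hs => ?_
  rw [LqNorm_eq_weightedNorm hq measurableSet_Ioo (Ioo_subset_Ioi_self.trans hc0),
    svRatio_eq_ofReal (ha s (hc0 hs)),
    ENNReal.ofReal_mul (Real.rpow_nonneg (le_of_lt (hc0 hs)) _), mul_assoc]

theorem ofReal_eq_holmstedtRho {d : ℝ → ℝ≥0∞} (hd : IsWeight (tailNorm r d)) {t : ℝ} (ht : 0 < t)
    (ha : 0 < a t) :
    ENNReal.ofReal (t ^ (θ₁ - θ₀) * (b₀ t / (a t * (tailNorm r d t).toReal))) =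
      holmstedtRho r (svWeight θ₀ b₀) (svWeight θ₁ a) d t := by
  have hR : 0 < (tailNorm r d t).toReal :=
    ENNReal.toReal_pos (hd.ne_zero ht) (hd.ne_top ht)
  have hw : 0 < t ^ (-θ₁) * a t := mul_pos (Real.rpow_pos_of_pos ht _) ha
  rw [holmstedtRho, svWeight, svWeight, ← ENNReal.ofReal_div_of_pos hw]
  nth_rewrite 2 [← ENNReal.ofReal_toReal (hd.ne_top ht)]
  rw [← ENNReal.ofReal_div_of_pos hR, sub_eq_neg_add, Real.rpow_add ht, Real.rpow_neg ht.le θ₁]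
  congr 1
  field_simp

end SlowlyVarying

theorem theorem17_general {G : Type*} [AddCommGroup G] {N₀ N₁ : G → ℝ≥0∞}
    (h₀ : IsAddGroupQuasiSeminorm N₀) (h₁ : IsAddGroupQuasiSeminorm N₁)
    {θ₀ θ₁ : ℝ} (hθ₀ : 0 < θ₀) (hθ₀₁ : θ₀ < θ₁) (hθ₁ : θ₁ < 1)
    {q₁ r₀ r₁ : ℝ≥0∞} (hq₁ : 0 < q₁) (hr₀ : 0 < r₀) (hr₁ : 0 < r₁) {a₁ b₀ b₁ : ℝ → ℝ}
    (h_sv_a₁ : SlowlyVarying a₁) (h_sv_b₀ : SlowlyVarying b₀) (h_sv_b₁ : SlowlyVarying b₁)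
    (hfin : LqNorm r₁ (Ioi 1) (svWgt r₁ (fun s => b₁ s / a₁ s)) ≠ ∞) {c₁ ρ : ℝ → ℝ}
    (hc₁ : ∀ t, c₁ t = a₁ t * (LqNorm r₁ (Ioi t) (svWgt r₁ (fun s => b₁ s / a₁ s))).toReal)
    (hρ : ∀ t, ρ t = t ^ (θ₁ - θ₀) * (b₀ t / c₁ t)) :
    ∃ C : ℝ≥0∞, 0 < C ∧ C ≠ ∞ ∧ ∀ (f : G) (t : ℝ), 0 < t →
      C⁻¹ * (LqNorm r₀ (Ioo 0 t) (fun u =>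
          ENNReal.ofReal (u ^ (-θ₀ - r₀⁻¹.toReal) * b₀ u) * Kf N₀ N₁ u f) +
        ENNReal.ofReal (ρ t) *
        LqNorm r₁ (Ioi t) (fun s =>
          ENNReal.ofReal (s ^ (-(r₁⁻¹.toReal)) * (b₁ s / a₁ s)) *
            LqNorm q₁ (Ioo t s) (fun u =>
              ENNReal.ofReal (u ^ (-θ₁ - q₁⁻¹.toReal) * a₁ u) * Kf N₀ N₁ u f)))
          ≤ Kf (normK N₀ N₁ θ₀ r₀ b₀) (normL N₀ N₁ θ₁ r₁ q₁ b₁ a₁) (ρ t) f ∧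
      Kf (normK N₀ N₁ θ₀ r₀ b₀) (normL N₀ N₁ θ₁ r₁ q₁ b₁ a₁) (ρ t) f
          ≤ C * (LqNorm r₀ (Ioo 0 t) (fun u =>
          ENNReal.ofReal (u ^ (-θ₀ - r₀⁻¹.toReal) * b₀ u) * Kf N₀ N₁ u f) +
        ENNReal.ofReal (ρ t) *
        LqNorm r₁ (Ioi t) (fun s =>
          ENNReal.ofReal (s ^ (-(r₁⁻¹.toReal)) * (b₁ s / a₁ s)) *
            LqNorm q₁ (Ioo t s) (fun u =>
              ENNReal.ofReal (u ^ (-θ₁ - q₁⁻¹.toReal) * a₁ u) * Kf N₀ N₁ u f))) := by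
  have ha := h_sv_a₁.2.1
  rw [LqNorm_svWgt_div_eq_tailNorm hr₁.ne' ha zero_le_one] at hfin
  have h := h_sv_b₀.isHolmstedtTriple h_sv_a₁ h_sv_b₁ hθ₀ hθ₀₁ hθ₁ hfin
  obtain ⟨C, hC, hC', H⟩ := h.exists_Kf_equiv h₀ h₁ hr₀.ne' hr₁.ne' hq₁.ne'
  have hX : normK N₀ N₁ θ₀ r₀ b₀ = _ :=
    funext fun g => LqNorm_eq_weightedNorm hr₀.ne' measurableSet_Ioi subset_rfl θ₀ b₀ _
  have hY : normL N₀ N₁ θ₁ r₁ q₁ b₁ a₁ = _ :=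
    funext fun g => LqNorm_LqNorm_eq_nestedNorm hr₁.ne' hq₁.ne' ha le_rfl θ₁ b₁ _
  refine ⟨C, hC, hC', fun f t ht => ?_⟩
  have hρt : ENNReal.ofReal (ρ t) = holmstedtRho r₁ (svWeight θ₀ b₀) (svWeight θ₁ a₁)
      (svRatio b₁ a₁) t := by
    rw [hρ, hc₁, LqNorm_svWgt_div_eq_tailNorm hr₁.ne' ha ht.le]
    exact ofReal_eq_holmstedtRho (h.weight_tailNorm hr₁.ne') ht (ha t ht)
  rw [hX, hY, LqNorm_eq_weightedNorm hr₀.ne' measurableSet_Ioo Ioo_subset_Ioi_self,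
    LqNorm_LqNorm_eq_nestedNorm hr₁.ne' hq₁.ne' ha ht.le]
  simpa only [holmstedtNorm, hρt] using H f ht hρt

theorem theorem17
    (A₀ A₁ : QuasiBanach E)
    (hne : ∃ x : E, x ≠ 0 ∧ A₀.N x ≠ ∞ ∧ A₁.N x ≠ ∞)
    (θ₀ θ₁ : ℝ) (hθ₀ : 0 < θ₀) (hθ₀₁ : θ₀ < θ₁) (hθ₁ : θ₁ < 1)
    (q₁ r₀ r₁ : ℝ≥0∞) (hq₁ : 0 < q₁) (hr₀ : 0 < r₀) (hr₁ : 0 < r₁)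
    (a₁ b₀ b₁ : ℝ → ℝ)
    (h_sv_a₁ : SlowlyVarying a₁)
    (h_sv_b₀ : SlowlyVarying b₀)
    (h_sv_b₁ : SlowlyVarying b₁)
    (hfin : LqNorm r₁ (Ioi 1) (svWgt r₁ (fun s => b₁ s / a₁ s)) ≠ ∞)
    (c₁ ρ : ℝ → ℝ)
    (hc₁ : ∀ t, c₁ t = a₁ t * (LqNorm r₁ (Ioi t) (svWgt r₁ (fun s => b₁ s / a₁ s))).toReal)
    (hρ : ∀ t, ρ t = t ^ (θ₁ - θ₀) * (b₀ t / c₁ t)) :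
    ∃ C : ℝ≥0∞, 0 < C ∧ C ≠ ∞ ∧
      ∀ f : E,
        (∃ f₀ f₁, f = f₀ + f₁ ∧ normK A₀.N A₁.N θ₀ r₀ b₀ f₀ ≠ ∞ ∧
          normL A₀.N A₁.N θ₁ r₁ q₁ b₁ a₁ f₁ ≠ ∞) →
        ∀ t : ℝ, 0 < t →
          C⁻¹ * (LqNorm r₀ (Ioo 0 t) (fun u =>
              ENNReal.ofReal (u ^ (-θ₀ - r₀⁻¹.toReal) * b₀ u) * Kf A₀.N A₁.N u f) +
            ENNReal.ofReal (ρ t) *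
            LqNorm r₁ (Ioi t) (fun s =>
              ENNReal.ofReal (s ^ (-(r₁⁻¹.toReal)) * (b₁ s / a₁ s)) *
                LqNorm q₁ (Ioo t s) (fun u =>
                  ENNReal.ofReal (u ^ (-θ₁ - q₁⁻¹.toReal) * a₁ u) * Kf A₀.N A₁.N u f)))
              ≤ Kf (normK A₀.N A₁.N θ₀ r₀ b₀) (normL A₀.N A₁.N θ₁ r₁ q₁ b₁ a₁) (ρ t) f ∧
          Kf (normK A₀.N A₁.N θ₀ r₀ b₀) (normL A₀.N A₁.N θ₁ r₁ q₁ b₁ a₁) (ρ t) f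
              ≤ C * (LqNorm r₀ (Ioo 0 t) (fun u =>
              ENNReal.ofReal (u ^ (-θ₀ - r₀⁻¹.toReal) * b₀ u) * Kf A₀.N A₁.N u f) +
            ENNReal.ofReal (ρ t) *
            LqNorm r₁ (Ioi t) (fun s =>
              ENNReal.ofReal (s ^ (-(r₁⁻¹.toReal)) * (b₁ s / a₁ s)) *
                LqNorm q₁ (Ioo t s) (fun u =>
                  ENNReal.ofReal (u ^ (-θ₁ - q₁⁻¹.toReal) * a₁ u) * Kf A₀.N A₁.N u f))) := by
  obtain ⟨C, hC, hC', H⟩ := theorem17_general A₀.isAddGroupQuasiSeminorm A₁.isAddGroupQuasiSeminorm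
    hθ₀ hθ₀₁ hθ₁ hq₁ hr₀ hr₁ h_sv_a₁ h_sv_b₀ h_sv_b₁ hfin hc₁ hρ
  exact ⟨C, hC, hC', fun f _ => H f⟩

end
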